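/- arXiv:math/0303024 — 2 statements merged into one kernel-verified Lean document; each statement's English description precedes it below -/
import Mathlib

section
/- Let P₁ and P₂ be two commuting operators (P₁∘P₂ = P₂∘P₁) on the same complex Banach space B, each as in the context. For h ∈ C_0^∞(ℝ²) with special almost holomorphic extension H, write I(H) = (1/π²)∫_ℂ∫_ℂ (∂²H/∂z̄₁∂z̄₂)(z₁,z₂)·(z₁·1 − P₁)⁻¹(z₂·1 − P₂)⁻¹ L(dz₁) L(dz₂). If f, g ∈ C_0^∞(ℝ²) have special almost holomorphic extensions F, G, and H is any special almost holomorphic extension of the pointwise product fg, then I(F) ∘ I(G) = I(H). -/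
open MeasureTheory Complex Real

noncomputable section

/-- `∂F/∂z̄₁` for `F : ℂ² → ℂ`. -/
def dbar1 (F : ℂ × ℂ → ℂ) (z : ℂ × ℂ) : ℂ :=
  (fderiv ℝ F z (1, 0) + Complex.I * fderiv ℝ F z (Complex.I, 0)) / 2

/-- `∂F/∂z̄₂` for `F : ℂ² → ℂ`. -/
def dbar2 (F : ℂ × ℂ → ℂ) (z : ℂ × ℂ) : ℂ :=
  (fderiv ℝ F z (0, 1) + Complex.I * fderiv ℝ F z (0, Complex.I)) / 2

/-- `∂²F/∂z̄₁∂z̄₂` for `F : ℂ² → ℂ`. -/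
def dbar12 (F : ℂ × ℂ → ℂ) (z : ℂ × ℂ) : ℂ := dbar1 (fun w => dbar2 F w) z

/-- `F` is a special almost holomorphic extension of `f ∈ C_0^∞(ℝ²)`. -/
def IsSpecialAHExt2 (f : ℝ × ℝ → ℂ) (F : ℂ × ℂ → ℂ) : Prop :=
  ContDiff ℝ (⊤ : ℕ∞) F ∧ HasCompactSupport F ∧
    (∀ x y : ℝ, F (x, y) = f (x, y)) ∧
    ∀ N : ℕ, ∃ C : ℝ, ∀ z : ℂ × ℂ,
      ‖dbar1 F z‖ ≤ C * |z.1.im| ^ N ∧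
      ‖dbar2 F z‖ ≤ C * |z.2.im| ^ N ∧
      ‖dbar12 F z‖ ≤ C * (|z.1.im| * |z.2.im|) ^ N

/-- The resolvent `(z·1 − P)⁻¹` (equal to `0` when `z·1 − P` is not invertible). -/
def res {B : Type*} [NormedAddCommGroup B] [NormedSpace ℂ B] (P : B →L[ℂ] B) (z : ℂ) :
    B →L[ℂ] B := Ring.inverse (z • (1 : B →L[ℂ] B) - P)

/-- The spectrum of `P` is real. -/
def RealSpectrum {B : Type*} [NormedAddCommGroup B] [NormedSpace ℂ B]
    (P : B →L[ℂ] B) : Prop := ∀ z ∈ spectrum ℂ P, z.im = 0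

/-- The resolvent of `P` has locally temperate growth near `ℝ`. -/
def TemperateResolventLoc {B : Type*} [NormedAddCommGroup B] [NormedSpace ℂ B]
    (P : B →L[ℂ] B) : Prop :=
  ∀ R > (0:ℝ), ∃ C N : ℝ, 0 ≤ C ∧ 0 ≤ N ∧ ∀ z : ℂ, z.im ≠ 0 → ‖z‖ ≤ R →
    ‖res P z‖ ≤ C * |z.im| ^ (-N)

/-- The two-operator functional calculus `I(H)` applied to a special almost
holomorphic extension `H`. -/
def calc2 {B : Type*} [NormedAddCommGroup B] [NormedSpace ℂ B] [CompleteSpace B]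
    (P₁ P₂ : B →L[ℂ] B) (H : ℂ × ℂ → ℂ) : B →L[ℂ] B :=
  ((1/(π:ℂ)^2)) • ∫ z : ℂ × ℂ, dbar12 H z • (res P₁ z.1 * res P₂ z.2)



/-- One-variable `∂̄`. -/
def dbar0 (a : ℂ → ℂ) (z : ℂ) : ℂ :=
  (fderiv ℝ a z 1 + Complex.I * fderiv ℝ a z Complex.I) / 2

lemma dbar0_continuous {a : ℂ → ℂ} (ha : ContDiff ℝ 1 a) : Continuous (dbar0 a) := by
  have h := ha.continuous_fderiv one_ne_zero
  unfold dbar0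
  fun_prop

lemma dbar0_zero_of {a : ℂ → ℂ} {M : ℝ} (h : ∀ z, M < ‖z‖ → a z = 0) :
    ∀ z, M < ‖z‖ → dbar0 a z = 0 := by
  intro z hz
  have : a =ᶠ[nhds z] fun _ => (0:ℂ) := by
    filter_upwards [(isOpen_lt continuous_const continuous_norm).mem_nhds hz] with w hw
    exact h w hw
  unfold dbar0
  rw [this.fderiv_eq]
  simp

lemma dbar0_rot (D : ℂ →L[ℝ] ℂ) (θ : ℝ) :
    (D 1 + I * D I) / 2 * (cexp (θ * I))⁻¹ =
      (D (cexp (θ * I)) + I * D (I * cexp (θ * I))) / 2 := by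
  have e1 : cexp (θ * I) = (Real.cos θ) • (1:ℂ) + (Real.sin θ) • I := by
    rw [Complex.exp_mul_I]; simp
  have e2 : I * cexp (θ * I) = (-Real.sin θ) • (1:ℂ) + (Real.cos θ) • I := by
    rw [e1]; simp; ring_nf; simp; ring
  have e3 : (cexp (θ * I))⁻¹ = Real.cos θ - Real.sin θ * I := by
    rw [← Complex.exp_neg, ← neg_mul, Complex.exp_mul_I, Complex.cos_neg, Complex.sin_neg]
    simp; ring
  rw [e2, e3, e1, map_add, map_add, map_smul, map_smul, map_smul, map_smul]
  simp only [Complex.real_smul]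
  push_cast
  linear_combination (-(Complex.sin θ) * D I / 2) * Complex.I_sq 

lemma cp_integrableOn {g : ℝ × ℝ → ℂ} (hg : Continuous g) {M : ℝ}
    (h : ∀ p : ℝ × ℝ, M < p.1 → g p = 0) :
    IntegrableOn g (Set.Ioi 0 ×ˢ Set.Ioo (-π) π) := by
  have h1 : IntegrableOn g (Set.Icc 0 M ×ˢ Set.Icc (-π) π) :=
    hg.continuousOn.integrableOn_compact (isCompact_Icc.prod isCompact_Icc)
  refine h1.of_forall_sdiff_eq_zero (measurableSet_Ioi.prod measurableSet_Ioo) ?_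
  rintro ⟨r, θ⟩ ⟨⟨hr, hθ⟩, h2⟩
  apply h
  by_contra hlt
  apply h2
  simp only [Set.mem_Ioi, Set.mem_Ioo, not_lt] at *
  exact ⟨⟨hr.le, hlt⟩, ⟨hθ.1.le, hθ.2.le⟩⟩

lemma cauchy_pompeiu_zero {b : ℂ → ℂ} (hb : ContDiff ℝ 1 b) {M : ℝ}
    (hM : ∀ z, M < ‖z‖ → b z = 0) :
    ∫ w : ℂ, dbar0 b w * w⁻¹ = -π * b 0 := by
  rw [← Complex.integral_comp_polarCoord_symm]
  set E : ℝ → ℂ := fun θ => cexp (θ * I) with hE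
  have hEc : Continuous E := by fun_prop
  have hEn : ∀ θ, ‖E θ‖ = 1 := fun θ => Complex.norm_exp_ofReal_mul_I θ
  set g1 : ℝ × ℝ → ℂ := fun p => fderiv ℝ b (p.1 * E p.2) (E p.2) with hg1
  set g2 : ℝ × ℝ → ℂ := fun p => fderiv ℝ b (p.1 * E p.2) (I * E p.2) with hg2
  have hfc := hb.continuous_fderiv one_ne_zero
  have hdiff : ∀ z, HasFDerivAt b (fderiv ℝ b z) z := fun z =>
    (hb.differentiable (by norm_num) z).hasFDerivAt
  have hfz : ∀ z, M < ‖z‖ → fderiv ℝ b z = 0 := by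
    intro z hz
    have : b =ᶠ[nhds z] fun _ => (0:ℂ) := by
      filter_upwards [(isOpen_lt continuous_const continuous_norm).mem_nhds hz] with w hw
      exact hM w hw
    rw [this.fderiv_eq]
    simp
  have hn : ∀ (r θ : ℝ), M < r → M < ‖(r:ℂ) * E θ‖ := by
    intro r θ h
    rw [norm_mul, hEn, mul_one, Complex.norm_real]
    exact h.trans_le (le_abs_self r)
  have hg1c : Continuous g1 := by
    have : Continuous fun p : ℝ × ℝ => fderiv ℝ b (p.1 * E p.2) := by fun_prop
    exact this.clm_apply (by fun_prop)
  have hg2c : Continuous g2 := by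
    have : Continuous fun p : ℝ × ℝ => fderiv ℝ b (p.1 * E p.2) := by fun_prop
    exact this.clm_apply (by fun_prop)
  have hg1z : ∀ p : ℝ × ℝ, M < p.1 → g1 p = 0 := by
    intro p hp
    simp only [hg1, hfz _ (hn _ p.2 hp)]; simp
  have hg2z : ∀ p : ℝ × ℝ, M < p.1 → g2 p = 0 := by
    intro p hp
    simp only [hg2, hfz _ (hn _ p.2 hp)]; simp
  have hi1 := cp_integrableOn hg1c hg1z
  have hi2 := cp_integrableOn hg2c hg2z
  have step : ∫ p in polarCoord.target, p.1 • (dbar0 b (Complex.polarCoord.symm p) *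
      (Complex.polarCoord.symm p)⁻¹) =
      ∫ p in (Set.Ioi 0 ×ˢ Set.Ioo (-π) π : Set (ℝ × ℝ)), (g1 p + I * g2 p) / 2 := by
    refine setIntegral_congr_fun (measurableSet_Ioi.prod measurableSet_Ioo) ?_
    rintro ⟨r, θ⟩ ⟨hr, -⟩
    have hr' : (r:ℂ) ≠ 0 := by
      have : r ≠ 0 := ne_of_gt hr
      exact_mod_cast this
    have e1 : Complex.polarCoord.symm (r, θ) = r * E θ := by
      rw [Complex.polarCoord_symm_apply, hE]
      simp only [Complex.exp_mul_I]; push_cast; ring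
    simp only [e1]
    have := dbar0_rot (fderiv ℝ b (r * E θ)) θ
    simp only [hg1, hg2]
    rw [← this, Complex.real_smul, mul_inv]
    unfold dbar0
    change (r:ℂ) * (_ * ((r:ℂ)⁻¹ * (E θ)⁻¹)) = _ * (E θ)⁻¹
    field_simp
  rw [step]
  have h1 : ∫ p in (Set.Ioi 0 ×ˢ Set.Ioo (-π) π : Set (ℝ × ℝ)), g1 p = -(2 * π) * b 0 := by
    rw [Measure.volume_eq_prod, ← Measure.prod_restrict, integral_prod_symm]
    swap
    · rw [Measure.prod_restrict]; exact hi1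
    have : ∀ θ : ℝ, ∫ r in Set.Ioi (0:ℝ), g1 (r, θ) = - b 0 := by
      intro θ
      have hd : ∀ r ∈ Set.Ici (0:ℝ), HasDerivAt (fun r : ℝ => b (r * E θ)) (g1 (r, θ)) r := by
        intro r _
        have h := (hdiff (r * E θ)).comp_hasDerivAt r
          (((Complex.ofRealCLM.hasDerivAt (x := r)).mul_const (E θ)))
        have e : g1 (r, θ) = fderiv ℝ b (r * E θ) (Complex.ofRealCLM 1 * E θ) := by simp [hg1]
        rw [e]
        exact h
      have h0 := integral_Ioi_of_hasDerivAt_of_tendsto' (m := 0) hd ?_ ?_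
      · rw [h0]; simp
      · have h1 : IntegrableOn (fun r => g1 (r, θ)) (Set.Icc 0 M) :=
          (by fun_prop : Continuous fun r => g1 (r, θ)).continuousOn.integrableOn_compact
            isCompact_Icc
        refine h1.of_forall_sdiff_eq_zero measurableSet_Ioi ?_
        intro r hr
        refine hg1z _ ?_
        by_contra hlt
        exact hr.2 ⟨le_of_lt hr.1, not_lt.1 hlt⟩
      · refine tendsto_const_nhds.congr' ?_
        filter_upwards [Filter.eventually_gt_atTop M] with r hr
        exact (hM _ (hn r θ hr)).symm
    simp only [this]
    simp
    left
    rw [max_eq_left (by positivity)]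
    push_cast; ring
  have h2 : ∫ p in (Set.Ioi 0 ×ˢ Set.Ioo (-π) π : Set (ℝ × ℝ)), g2 p = 0 := by
    rw [Measure.volume_eq_prod, ← Measure.prod_restrict, integral_prod]
    swap
    · rw [Measure.prod_restrict]; exact hi2
    rw [← integral_zero ℝ ℂ (μ := volume.restrict (Set.Ioi 0))]
    refine setIntegral_congr_fun measurableSet_Ioi ?_
    intro r hr
    have hr' : (r:ℂ) ≠ 0 := by
      have : r ≠ 0 := ne_of_gt hr
      exact_mod_cast this
    have hd : ∀ θ : ℝ, HasDerivAt (fun θ : ℝ => (r:ℂ)⁻¹ * b (r * E θ)) (g2 (r, θ)) θ := by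
      intro θ
      have hE' : HasDerivAt (fun θ : ℝ => (r:ℂ) * E θ) (r * (E θ * I)) θ := by
        have h := ((Complex.ofRealCLM.hasDerivAt (x := θ)).mul_const I).cexp
        simpa [hE] using h.const_mul (r:ℂ)
      have h := ((hdiff (r * E θ)).comp_hasDerivAt θ hE').const_mul (r:ℂ)⁻¹
      have e : g2 (r, θ) = (r:ℂ)⁻¹ * fderiv ℝ b (r * E θ) (r * (E θ * I)) := by
        have : (r:ℂ) * (E θ * I) = r • (I * E θ) := by
          rw [Complex.real_smul]; ring
        rw [this, map_smul, Complex.real_smul]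
        simp only [hg2]
        field_simp
      rw [e]
      exact h
    have hpi : -π ≤ π := by linarith [Real.pi_pos]
    show ∫ θ in Set.Ioo (-π) π, g2 (r, θ) = 0
    rw [← integral_Ioc_eq_integral_Ioo, ← intervalIntegral.integral_of_le hpi,
      intervalIntegral.integral_eq_sub_of_hasDerivAt (fun θ _ => hd θ)
        ((by fun_prop : Continuous fun θ => g2 (r, θ)).intervalIntegrable _ _)]
    have : E π = E (-π) := by
      simp only [hE]; push_cast; rw [neg_mul, Complex.exp_neg, Complex.exp_pi_mul_I]; norm_num
    rw [this, sub_self]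
  rw [integral_div, integral_add hi1 (hi2.const_mul I), integral_const_mul, h1, h2]
  ring

lemma cauchy_pompeiu {b : ℂ → ℂ} (hb : ContDiff ℝ 1 b) {M : ℝ}
    (hM : ∀ z, M < ‖z‖ → b z = 0) (z : ℂ) :
    ∫ w : ℂ, dbar0 b w * (w - z)⁻¹ = -π * b z := by
  have h := cauchy_pompeiu_zero (b := fun w => b (w + z)) (M := M + ‖z‖)
    (hb.comp (contDiff_id.add contDiff_const)) (by
      intro w hw
      apply hM
      have := norm_sub_le (w + z) z
      simp only [add_sub_cancel_right] at this
      linarith)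
  rw [zero_add] at h
  rw [← h, ← integral_add_right_eq_self _ z]
  congr 1; ext w
  simp [dbar0, fderiv_comp_add_right]



/-- Abstract resolvent-like families. -/
structure IsRes {A : Type*} [NormedRing A] [NormedAlgebra ℂ A] (R : ℂ → A) : Prop where
  diff : ∀ z : ℂ, z.im ≠ 0 → DifferentiableAt ℂ R z
  temp : ∀ M : ℝ, ∃ C : ℝ, 0 ≤ C ∧ ∃ n : ℕ, ∀ z : ℂ, z.im ≠ 0 → ‖z‖ ≤ M →
    ‖R z‖ * |z.im| ^ n ≤ C
  ident : ∀ z w : ℂ, z.im ≠ 0 → w.im ≠ 0 → R z - R w = (w - z) • (R z * R w)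

/-- Continuous, compactly supported, flat on the zero set of `W`. -/
structure Good {X E : Type*} [NormedAddCommGroup X] [NormedAddCommGroup E]
    (W : X → ℝ) (u : X → E) : Prop where
  cont : Continuous u
  supp : ∃ M : ℝ, ∀ x, M < ‖x‖ → u x = 0
  flat : ∀ N : ℕ, ∃ C : ℝ, 0 ≤ C ∧ ∀ x, ‖u x‖ ≤ C * W x ^ N

section
variable {X E : Type*} [NormedAddCommGroup X] [NormedAddCommGroup E]
variable {A : Type*} [NormedRing A] [NormedAlgebra ℂ A]

lemma hcs_of_bound [ProperSpace X] {u : X → E} (h : ∃ M : ℝ, ∀ x, M < ‖x‖ → u x = 0) :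
    HasCompactSupport u := by
  obtain ⟨M, hM⟩ := h
  refine HasCompactSupport.intro (isCompact_closedBall (0:X) M) ?_
  intro x hx
  apply hM
  simpa using hx

lemma bound_of_hcs {u : X → E} (h : HasCompactSupport u) :
    ∃ M : ℝ, ∀ x, M < ‖x‖ → u x = 0 := by
  obtain ⟨M, hM⟩ := h.isCompact.isBounded.exists_norm_le
  refine ⟨M, fun x hx => ?_⟩
  by_contra hne
  exact absurd (hM x (subset_tsupport _ hne)) (not_le.2 hx)

lemma integrable_of_cs [ProperSpace X] [MeasurableSpace X] [BorelSpace X]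
    {μ : Measure X} [IsFiniteMeasureOnCompacts μ] {u : X → E} (hu : Continuous u)
    (h : ∃ M : ℝ, ∀ x, M < ‖x‖ → u x = 0) : Integrable u μ :=
  hu.integrable_of_hasCompactSupport (hcs_of_bound h)

lemma Good.integrable [ProperSpace X] [MeasurableSpace X] [BorelSpace X]
    {μ : Measure X} [IsFiniteMeasureOnCompacts μ] {W : X → ℝ} {u : X → E} (hu : Good W u) :
    Integrable u μ := integrable_of_cs hu.cont hu.supp

lemma bdd_on_ball [ProperSpace X] {u : X → E} (hu : Continuous u) (M : ℝ) :
    ∃ C : ℝ, 0 ≤ C ∧ ∀ x, ‖x‖ ≤ M → ‖u x‖ ≤ C := by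
  obtain ⟨C, hC⟩ := (isCompact_closedBall (0:X) M).exists_bound_of_continuousOn hu.continuousOn
  exact ⟨max C 0, le_max_right _ _, fun x hx => (hC x (by simpa using hx)).trans (le_max_left _ _)⟩

lemma Good.smul_one {W : X → ℝ} {φ : X → ℂ} (h : Good W φ) :
    Good W (fun x => φ x • (1:A)) where
  cont := h.cont.smul continuous_const
  supp := by
    obtain ⟨M, hM⟩ := h.supp
    exact ⟨M, fun x hx => by rw [hM x hx, zero_smul]⟩
  flat := by
    intro N
    obtain ⟨C, hC, h⟩ := h.flat N
    refine ⟨C * ‖(1:A)‖, by positivity, fun x => ?_⟩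
    rw [norm_smul]
    calc _ ≤ C * W x ^ N * ‖(1:A)‖ := by gcongr; exact h x
      _ = _ := by ring

lemma Good.mul_res [ProperSpace X] {W w : X → ℝ} {c : X → ℂ} {R : ℂ → A} {u : X → A}
    (hu : Good W u) (hR : IsRes R) (hc : Continuous c)
    (hw : Continuous w) (hw0 : ∀ x, 0 ≤ w x) (hW : ∀ x, W x = |(c x).im| * w x) :
    Good W (fun x => u x * R (c x)) := by
  have hW0 : ∀ x, 0 ≤ W x := fun x => by rw [hW]; exact mul_nonneg (abs_nonneg _) (hw0 x)
  have hWc : Continuous W := by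
    have : W = fun x => |(c x).im| * w x := funext hW
    rw [this]; fun_prop
  obtain ⟨M, hM⟩ := hu.supp
  obtain ⟨K, hK0, hK⟩ := bdd_on_ball hc M
  obtain ⟨L, hL0, hL⟩ := bdd_on_ball hw M
  obtain ⟨D, hD0, n, hD⟩ := hR.temp K
  have hflat : ∀ N : ℕ, ∃ C : ℝ, 0 ≤ C ∧ ∀ x, ‖u x * R (c x)‖ ≤ C * W x ^ N := by
    intro N
    obtain ⟨C, hC0, hC⟩ := hu.flat (N + n)
    refine ⟨C * D * L ^ n, by positivity, fun x => ?_⟩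
    have hpos : 0 ≤ C * D * L ^ n * W x ^ N := by have := hW0 x; positivity
    by_cases hx : M < ‖x‖
    · rw [hM x hx, zero_mul, norm_zero]; exact hpos
    push Not at hx
    by_cases him : (c x).im = 0
    · obtain ⟨C1, -, hC1⟩ := hu.flat 1
      have h1 := hC1 x
      have : W x = 0 := by rw [hW, him]; simp
      rw [this] at h1
      have : u x = 0 := by simpa using h1
      rw [this, zero_mul, norm_zero]; exact hpos
    have hw' : w x ≤ L := (le_abs_self _).trans (hL x hx)
    have hr := hD (c x) him (hK x hx)
    have hw0' := hw0 x
    have hW0' := hW0 x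
    calc ‖u x * R (c x)‖ ≤ ‖u x‖ * ‖R (c x)‖ := norm_mul_le _ _
      _ ≤ C * W x ^ (N + n) * ‖R (c x)‖ := by gcongr; exact hC x
      _ = C * W x ^ N * (‖R (c x)‖ * |(c x).im| ^ n) * w x ^ n := by
          rw [pow_add]; nth_rewrite 2 [hW x]; rw [mul_pow]; ring
      _ ≤ C * W x ^ N * D * L ^ n := by gcongr
      _ = _ := by ring
  refine ⟨?_, ⟨M, fun x hx => by rw [hM x hx, zero_mul]⟩, hflat⟩
  rw [continuous_iff_continuousAt]
  intro x
  by_cases him : (c x).im = 0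
  · obtain ⟨C, -, hC⟩ := hflat 1
    have hWx : W x = 0 := by rw [hW, him]; simp
    have h0 : u x * R (c x) = 0 := by
      have := hC x
      rw [hWx] at this
      simpa using this
    rw [ContinuousAt, h0]
    refine squeeze_zero_norm hC ?_
    have : Filter.Tendsto (fun x => C * W x ^ 1) (nhds x) (nhds (C * W x ^ 1)) :=
      (by fun_prop : Continuous fun x => C * W x ^ 1).tendsto x
    simpa [hWx] using this
  · exact hu.cont.continuousAt.mul
      (ContinuousAt.comp (f := c) (hR.diff _ him).continuousAt hc.continuousAt)

lemma ae_im_ne : ∀ᵐ z : ℂ, z.im ≠ 0 := by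
  have h : (volume : Measure ℂ) {z : ℂ | z.im = 0} = 0 := by
    have := Measure.addHaar_submodule (volume : Measure ℂ) (LinearMap.ker Complex.imLm) (by
      intro h
      have : (I:ℂ) ∈ LinearMap.ker Complex.imLm := by rw [h]; trivial
      simp at this)
    have e : {z : ℂ | z.im = 0} = ↑(LinearMap.ker Complex.imLm) := by
      ext z; simp
    rw [e]; exact this
  rw [ae_iff]
  simpa using h

lemma kernel_integrable {v : ℂ → ℂ} {u : ℂ → A} (hv : Continuous v)
    (hvs : ∃ M : ℝ, ∀ x, M < ‖x‖ → v x = 0) (hu : Continuous u)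
    (hus : ∃ M : ℝ, ∀ x, M < ‖x‖ → u x = 0) :
    Integrable (fun p : ℂ × ℂ => (v p.2 * (p.2 - p.1)⁻¹) • u p.1) (volume.prod volume) := by
  obtain ⟨M, hM⟩ := hvs
  obtain ⟨K, hK⟩ := hus
  have hk : Integrable ((Metric.ball (0:ℂ) (M + K + 1)).indicator fun ζ : ℂ => ζ⁻¹) := by
    rw [integrable_indicator_iff Metric.isOpen_ball.measurableSet]
    refine integrableOn_ball_of_norm_le_rpow (C := 1) (α := 1) (by simp) (by simp) ?_
      measurable_inv.aestronglyMeasurable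
    refine Filter.Eventually.of_forall fun x => ?_
    rw [Real.rpow_neg_one, norm_inv, one_mul]
  have h1 := (integrable_of_cs (μ := volume) hu ⟨K, hK⟩).convolution_integrand
    (ContinuousLinearMap.lsmul ℝ ℂ : ℂ →L[ℝ] A →L[ℝ] A).flip hk
  obtain ⟨D, hD0, hD⟩ := bdd_on_ball hv M
  have h2 := h1.swap.bdd_smul (φ := fun p : ℂ × ℂ => v p.2) D
    (by fun_prop : Continuous fun p : ℂ × ℂ => v p.2).aestronglyMeasurable
    (Filter.Eventually.of_forall fun p => by
      by_cases h : M < ‖p.2‖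
      · rw [hM _ h, norm_zero]; exact hD0
      · exact hD _ (not_lt.1 h))
  refine h2.congr (Filter.Eventually.of_forall fun p => ?_)
  obtain ⟨z, w⟩ := p
  simp only [Pi.smul_apply', Function.comp_apply, Prod.swap_prod_mk,
    ContinuousLinearMap.flip_apply, ContinuousLinearMap.lsmul_apply]
  by_cases hw : M < ‖w‖
  · rw [hM _ hw]; simp
  by_cases hz : K < ‖z‖
  · rw [hK _ hz]; simp
  rw [Set.indicator_of_mem, smul_smul]
  rw [mem_ball_zero_iff]
  have := norm_sub_le w z
  push Not at hw hz
  linarith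

variable [CompleteSpace A]

lemma one_var_mul {R : ℂ → A} (hR : IsRes R) {a b : ℂ → ℂ} (ha : ContDiff ℝ 1 a)
    (hb : ContDiff ℝ 1 b) (has : ∃ M : ℝ, ∀ x, M < ‖x‖ → a x = 0)
    (hbs : ∃ M : ℝ, ∀ x, M < ‖x‖ → b x = 0)
    (haf : ∀ N : ℕ, ∃ C : ℝ, 0 ≤ C ∧ ∀ x, ‖dbar0 a x‖ ≤ C * |x.im| ^ N)
    (hbf : ∀ N : ℕ, ∃ C : ℝ, 0 ≤ C ∧ ∀ x, ‖dbar0 b x‖ ≤ C * |x.im| ^ N) :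
    (∫ z, dbar0 a z • R z) * (∫ w, dbar0 b w • R w) =
      (-π : ℂ) • ∫ z, (dbar0 a z * b z + a z * dbar0 b z) • R z := by
  have key : ∀ {a : ℂ → ℂ}, ContDiff ℝ 1 a → (∃ M : ℝ, ∀ x, M < ‖x‖ → a x = 0) →
      (∀ N : ℕ, ∃ C : ℝ, 0 ≤ C ∧ ∀ x, ‖dbar0 a x‖ ≤ C * |x.im| ^ N) →
      Good (fun z : ℂ => |z.im|) (fun z => dbar0 a z • R z) := by
    intro a ha has haf
    have g : Good (fun z : ℂ => |z.im|) (dbar0 a) :=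
      ⟨dbar0_continuous ha, ⟨has.choose, dbar0_zero_of has.choose_spec⟩, haf⟩
    have := (g.smul_one (A := A)).mul_res hR continuous_id (w := fun _ => 1) continuous_const
      (by simp) (by simp)
    simpa using this
  have ga := key ha has haf
  have gb := key hb hbs hbf
  have has' : ∃ M : ℝ, ∀ x, M < ‖x‖ → dbar0 a x = 0 :=
    ⟨has.choose, dbar0_zero_of has.choose_spec⟩
  have hbs' : ∃ M : ℝ, ∀ x, M < ‖x‖ → dbar0 b x = 0 :=
    ⟨hbs.choose, dbar0_zero_of hbs.choose_spec⟩
  obtain ⟨Ma, hMa⟩ := has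
  obtain ⟨Mb, hMb⟩ := hbs
  have iX := kernel_integrable (dbar0_continuous hb) hbs' ga.cont ga.supp
  have iY : Integrable (Function.uncurry fun z w : ℂ =>
      (dbar0 a z * (z - w)⁻¹) • (dbar0 b w • R w)) (volume.prod volume) :=
    (kernel_integrable (dbar0_continuous ha) has' gb.cont gb.supp).swap
  have eX : ∫ z, ∫ w, (dbar0 b w * (w - z)⁻¹) • (dbar0 a z • R z) =
      ∫ z, (-π : ℂ) • ((dbar0 a z * b z) • R z) := by
    congr 1; ext z
    rw [integral_smul_const, cauchy_pompeiu hb hMb z, smul_smul, smul_smul]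
    congr 1; ring
  have eY : ∫ z, ∫ w, (dbar0 a z * (z - w)⁻¹) • (dbar0 b w • R w) =
      ∫ w, (-π : ℂ) • ((a w * dbar0 b w) • R w) := by
    rw [integral_integral_swap iY]
    congr 1; ext w
    rw [integral_smul_const, cauchy_pompeiu ha hMa w, smul_smul, smul_smul]
    congr 1; ring
  have i1 : Integrable fun z => (dbar0 a z * b z) • R z := by
    have : (fun z => (dbar0 a z * b z) • R z) = fun z => b z • (dbar0 a z • R z) := by
      ext z; rw [smul_smul, mul_comm]
    rw [this]
    exact integrable_of_cs (hb.continuous.smul ga.cont)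
      ⟨Mb, fun x hx => by rw [hMb x hx, zero_smul]⟩
  have i2 : Integrable fun z => (a z * dbar0 b z) • R z := by
    have : (fun z => (a z * dbar0 b z) • R z) = fun z => a z • (dbar0 b z • R z) := by
      ext z; rw [smul_smul]
    rw [this]
    exact integrable_of_cs (ha.continuous.smul gb.cont)
      ⟨Ma, fun x hx => by rw [hMa x hx, zero_smul]⟩
  calc (∫ z, dbar0 a z • R z) * (∫ w, dbar0 b w • R w)
      = ∫ z, ∫ w, (dbar0 a z • R z) * (dbar0 b w • R w) := by
        rw [← integral_mul_const_of_integrable ga.integrable]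
        congr 1; ext z
        rw [integral_const_mul_of_integrable gb.integrable]
    _ = ∫ z, ∫ w, ((dbar0 b w * (w - z)⁻¹) • (dbar0 a z • R z) +
          (dbar0 a z * (z - w)⁻¹) • (dbar0 b w • R w)) := by
        refine integral_congr_ae ?_
        filter_upwards [ae_im_ne] with z hz
        refine integral_congr_ae ?_
        have hne : ∀ᵐ w : ℂ, w ≠ z := by
          rw [ae_iff]; simp
        filter_upwards [ae_im_ne, hne] with w hw hwz
        have hwz' : w - z ≠ 0 := sub_ne_zero.2 hwz
        have h := hR.ident z w hz hw
        have h3 : R z * R w = (w - z)⁻¹ • R z - (w - z)⁻¹ • R w := by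
          rw [← smul_sub, h, smul_smul, inv_mul_cancel₀ hwz', one_smul]
        rw [smul_mul_smul_comm, h3, ← neg_sub w z, inv_neg, smul_sub, smul_smul, smul_smul,
          smul_smul, smul_smul, sub_eq_add_neg, ← neg_smul]
        congr 2 <;> ring
    _ = ∫ z, ((∫ w, (dbar0 b w * (w - z)⁻¹) • (dbar0 a z • R z)) +
          ∫ w, (dbar0 a z * (z - w)⁻¹) • (dbar0 b w • R w)) := by
        refine integral_congr_ae ?_
        filter_upwards [iX.prod_right_ae, iY.prod_right_ae] with z h1 h2
        exact integral_add h1 h2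
    _ = _ := by
        have h12 := integral_add iX.integral_prod_left iY.integral_prod_left
        simp only [Function.uncurry] at h12
        rw [h12, eX, eY, integral_smul, integral_smul, ← smul_add, ← integral_add i1 i2]
        congr 2; ext z
        rw [add_smul]
end



/-- Shift away from the real axis. -/
def sh (ε : ℝ) (z : ℂ) : ℂ := if 0 < z.im then z + ε * I else z - ε * I

section
variable {A : Type*} [NormedRing A] [NormedAlgebra ℂ A]

lemma sh_im {ε : ℝ} (hε : 0 < ε) (z : ℂ) : |(sh ε z).im| = |z.im| + ε := by
  unfold sh
  split_ifs with h
  · simp only [add_im, mul_im, ofReal_re, I_im, mul_one, ofReal_im, I_re, mul_zero, add_zero]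
    rw [abs_of_pos h, abs_of_pos (by linarith)]
  · simp only [sub_im, mul_im, ofReal_re, I_im, mul_one, ofReal_im, I_re, mul_zero, add_zero]
    push Not at h
    rw [abs_of_nonpos h, abs_of_nonpos (by linarith)]
    ring

lemma sh_im_ne {ε : ℝ} (hε : 0 < ε) (z : ℂ) : (sh ε z).im ≠ 0 := by
  have := sh_im hε z
  intro h
  rw [h, abs_zero] at this
  have := abs_nonneg z.im
  linarith

lemma sh_norm {ε : ℝ} (hε : 0 < ε) (z : ℂ) : ‖sh ε z‖ ≤ ‖z‖ + ε := by
  have e : ‖(ε:ℂ) * I‖ = ε := by simp [abs_of_pos hε]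
  unfold sh
  split_ifs with h
  · exact (norm_add_le _ _).trans (by rw [e])
  · exact (norm_sub_le _ _).trans (by rw [e])

lemma sh_temp {R : ℂ → A} (hR : IsRes R) (M : ℝ) :
    ∃ C : ℝ, 0 ≤ C ∧ ∃ n : ℕ, ∀ ε : ℝ, 0 < ε → ε ≤ 1 → ∀ z : ℂ, ‖z‖ ≤ M →
      ‖R (sh ε z)‖ * (|z.im| + ε) ^ n ≤ C := by
  obtain ⟨C, hC, n, h⟩ := hR.temp (M + 1)
  refine ⟨C, hC, n, fun ε hε hε1 z hz => ?_⟩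
  have := h (sh ε z) (sh_im_ne hε z) ((sh_norm hε z).trans (by linarith))
  rwa [sh_im hε] at this

lemma sh_bdd {R : ℂ → A} (hR : IsRes R) (M : ℝ) {ε : ℝ} (hε : 0 < ε) (hε1 : ε ≤ 1) :
    ∃ C : ℝ, ∀ z : ℂ, ‖z‖ ≤ M → ‖R (sh ε z)‖ ≤ C := by
  obtain ⟨C, hC, n, h⟩ := sh_temp hR M
  refine ⟨C / ε ^ n, fun z hz => ?_⟩
  rw [le_div_iff₀ (by positivity)]
  refine le_trans ?_ (h ε hε hε1 z hz)
  gcongr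
  have := abs_nonneg z.im
  linarith

lemma sh_meas {R : ℂ → A} (hR : IsRes R) {ε : ℝ} (hε : 0 < ε) :
    AEStronglyMeasurable (fun z => R (sh ε z)) volume := by
  classical
  have hm : MeasurableSet {z : ℂ | 0 < z.im} := measurableSet_lt measurable_const measurable_im
  have e : (fun z => R (sh ε z)) = {z : ℂ | 0 < z.im}.piecewise (fun z => R (z + ε * I))
      (fun z => R (z - ε * I)) := by
    ext z
    by_cases h : 0 < z.im
    · simp [Set.piecewise, sh, h]
    · simp [Set.piecewise, sh, h]
  rw [e]
  refine AEStronglyMeasurable.piecewise hm ?_ ?_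
  · refine ContinuousOn.aestronglyMeasurable (fun z hz => ContinuousAt.continuousWithinAt ?_) hm
    refine ContinuousAt.comp (f := fun z : ℂ => z + ε * I)
      (hR.diff _ ?_).continuousAt (by fun_prop)
    have hz' : 0 < z.im := hz
    simp; linarith
  · refine ContinuousOn.aestronglyMeasurable (fun z hz => ContinuousAt.continuousWithinAt ?_)
      hm.compl
    refine ContinuousAt.comp (f := fun z : ℂ => z - ε * I)
      (hR.diff _ ?_).continuousAt (by fun_prop)
    have hz' : z.im ≤ 0 := not_lt.1 hz
    simp; linarith

lemma integrable_smul_bdd {X E : Type*} [NormedAddCommGroup X] [NormedAddCommGroup E]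
    [NormedSpace ℂ E] [ProperSpace X]
    [MeasurableSpace X] [BorelSpace X] {μ : Measure X} [IsFiniteMeasureOnCompacts μ] {φ : X → ℂ}
    {T : X → E} (hφ : Continuous φ) {M : ℝ} (hM : ∀ x, M < ‖x‖ → φ x = 0)
    (hT : AEStronglyMeasurable T μ) (hb : ∃ C : ℝ, ∀ x, ‖x‖ ≤ M → ‖T x‖ ≤ C) :
    Integrable (fun x => φ x • T x) μ := by
  obtain ⟨C, hC⟩ := hb
  have h := (integrable_of_cs (μ := μ) hφ ⟨M, hM⟩).norm.mul_const C
  refine h.mono' (hφ.aestronglyMeasurable.smul hT) (Filter.Eventually.of_forall fun x => ?_)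
  by_cases hx : M < ‖x‖
  · rw [hM x hx]; simp
  · rw [norm_smul]
    gcongr
    exact hC x (not_lt.1 hx)

lemma green_upper {E : Type*} [NormedAddCommGroup E] [NormedSpace ℂ E] [CompleteSpace E]
    {α : ℂ → ℂ} {T : ℂ → E} (hα : ContDiff ℝ 1 α) {M : ℝ} (hM : ∀ z, M < ‖z‖ → α z = 0)
    (hT : ∀ z : ℂ, 0 ≤ z.im → DifferentiableAt ℂ T z) :
    ∫ z in {z : ℂ | 0 < z.im}, dbar0 α z • T z = (-I / 2) • ∫ x : ℝ, α x • T x := by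
  obtain ⟨L, hL⟩ : ∃ L : ℝ, L = |M| + 1 := ⟨_, rfl⟩
  have hL0 : 0 < L := by rw [hL]; positivity
  have hLM : M < L := by rw [hL]; linarith [le_abs_self M]
  have hm : MeasurableSet {z : ℂ | 0 < z.im} := measurableSet_lt measurable_const measurable_im
  have hLz : ∀ z : ℂ, L ≤ |z.re| ∨ L ≤ |z.im| → M < ‖z‖ := by
    rintro z (h | h)
    · exact hLM.trans_le (h.trans (abs_re_le_norm z))
    · exact hLM.trans_le (h.trans (abs_im_le_norm z))
  have hz0 : ∀ z : ℂ, L ≤ |z.re| ∨ L ≤ |z.im| → α z = 0 := fun z h => hM z (hLz z h)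
  have hdz : ∀ z : ℂ, L ≤ |z.re| ∨ L ≤ |z.im| → dbar0 α z = 0 :=
    fun z h => dbar0_zero_of hM z (hLz z h)
  have hcd := dbar0_continuous hα
  have huIm : ∀ z ∈ (Set.uIcc (-L) L ×ℂ Set.uIcc 0 L), 0 ≤ z.im := by
    intro z hz
    have := (Complex.mem_reProdIm.1 hz).2
    rw [Set.uIcc_of_le hL0.le] at this
    exact this.1
  have hTc : ContinuousOn T (Set.uIcc (-L) L ×ℂ Set.uIcc 0 L) := fun z hz =>
    (hT z (huIm z hz)).continuousAt.continuousWithinAt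
  have hcomp : IsCompact (Set.uIcc (-L) L ×ℂ Set.uIcc 0 L) :=
    isCompact_uIcc.reProdIm isCompact_uIcc
  let f' : ℂ → ℂ →L[ℝ] E := fun z =>
    α z • ((fderiv ℂ T z).restrictScalars ℝ) + (fderiv ℝ α z).smulRight (T z)
  have hf' : ∀ z, I • f' z 1 - f' z I = (2 * I * dbar0 α z) • T z := by
    intro z
    have e : fderiv ℂ T z I = I • fderiv ℂ T z 1 := by
      rw [← map_smul, smul_eq_mul, mul_one]
    simp only [f', add_apply, smul_apply,
      ContinuousLinearMap.coe_restrictScalars', ContinuousLinearMap.smulRight_apply, e, dbar0]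
    have h2 : (2 * I * ((fderiv ℝ α z 1 + I * fderiv ℝ α z I) / 2)) =
        I * fderiv ℝ α z 1 - fderiv ℝ α z I := by
      linear_combination (fderiv ℝ α z I) * I_mul_I
    rw [h2]
    module
  have hrect := Complex.integral_boundary_rect_of_hasFDerivAt_real_off_countable
    (fun z => α z • T z) f' (⟨-L, 0⟩ : ℂ) (⟨L, L⟩ : ℂ) ∅ Set.countable_empty
    (hα.continuous.continuousOn.smul hTc) (by
      intro z hz
      have hz2 := (Complex.mem_reProdIm.1 hz.1).2
      have : 0 < z.im := by
        have := hz2.1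
        simpa [min_eq_left hL0.le] using this
      have h1 := (hT z this.le).hasFDerivAt.restrictScalars ℝ
      have h2 := ((hα.differentiable (by norm_num)) z).hasFDerivAt
      exact h2.smul h1) (by
      simp only [hf']
      refine ContinuousOn.integrableOn_compact hcomp ?_
      exact (by fun_prop : Continuous fun z => 2 * I * dbar0 α z).continuousOn.smul hTc)
  simp only [hf'] at hrect
  have hLabs : |L| = L := abs_of_pos hL0
  have b1 : (∫ x : ℝ in (-L)..L, α (x + (L:ℝ) * I) • T (x + (L:ℝ) * I)) = 0 := by
    refine (intervalIntegral.integral_congr (g := fun _ => 0) fun x _ => ?_).trans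
      intervalIntegral.integral_zero
    beta_reduce
    rw [hz0 _ (Or.inr (by simp [hLabs])), zero_smul]
  have b2 : (∫ y : ℝ in (0:ℝ)..L, α ((L:ℝ) + y * I) • T ((L:ℝ) + y * I)) = 0 := by
    refine (intervalIntegral.integral_congr (g := fun _ => 0) fun x _ => ?_).trans
      intervalIntegral.integral_zero
    beta_reduce
    rw [hz0 _ (Or.inl (by simp [hLabs])), zero_smul]
  have b3 : (∫ y : ℝ in (0:ℝ)..L, α ((-L:ℝ) + y * I) • T ((-L:ℝ) + y * I)) = 0 := by
    refine (intervalIntegral.integral_congr (g := fun _ => 0) fun x _ => ?_).trans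
      intervalIntegral.integral_zero
    beta_reduce
    rw [hz0 _ (Or.inl (by simp [hLabs])), zero_smul]
  simp only [b1, b2, b3, sub_zero, smul_zero, add_zero] at hrect
  have hsupp : ∀ g : ℝ → E, (∀ x, L ≤ |x| → g x = 0) → ∫ x in (-L)..L, g x = ∫ x, g x := by
    intro g hg
    rw [intervalIntegral.integral_of_le (by linarith)]
    apply setIntegral_eq_integral_of_forall_compl_eq_zero
    intro x hx
    apply hg
    by_contra hlt
    push Not at hlt
    have := abs_lt.1 hlt
    exact hx ⟨this.1, this.2.le⟩
  have e1 : ∫ x : ℝ in (-L)..L, α (x + (0:ℝ) * I) • T (x + (0:ℝ) * I) = ∫ x : ℝ, α x • T x := by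
    rw [hsupp]
    · simp
    · intro x hx
      rw [hz0 _ (Or.inl (by simpa using hx)), zero_smul]
  have e2 : ∫ x : ℝ in (-L)..L, ∫ y : ℝ in (0:ℝ)..L,
      (2 * I * dbar0 α (x + y * I)) • T (x + y * I) =
      ∫ z in {z : ℂ | 0 < z.im}, (2 * I * dbar0 α z) • T z := by
    rw [hsupp]
    swap
    · intro x hx
      refine (intervalIntegral.integral_congr (g := fun _ => 0) fun y _ => ?_).trans
        intervalIntegral.integral_zero
      beta_reduce
      rw [hdz _ (Or.inl (by simpa using hx))]; simp
    rw [← integral_indicator hm,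
      ← (Complex.volume_preserving_equiv_real_prod.symm _).integral_comp
        (Complex.measurableEquivRealProd.symm.measurableEmbedding), Measure.volume_eq_prod,
        integral_prod]
    · congr 1; ext x
      rw [intervalIntegral.integral_of_le hL0.le, ← integral_indicator measurableSet_Ioc]
      congr 1; ext y
      have ez : Complex.measurableEquivRealProd.symm (x, y) = x + y * I := by
        apply Complex.ext <;> simp [Complex.measurableEquivRealProd]
      rw [ez]
      by_cases hy : 0 < y
      · have hy' : (x + y * I : ℂ) ∈ {z : ℂ | 0 < z.im} := by simpa using hy
        rw [Set.indicator_of_mem hy']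
        by_cases hyL : y ≤ L
        · have hyI : y ∈ Set.Ioc 0 L := ⟨hy, hyL⟩
          rw [Set.indicator_of_mem hyI]
        · rw [Set.indicator_of_notMem (fun h => hyL h.2),
            hdz _ (Or.inr (by simpa using (not_le.1 hyL).le.trans (le_abs_self y)))]
          simp
      · have hy' : (x + y * I : ℂ) ∉ {z : ℂ | 0 < z.im} := by simpa using hy
        rw [Set.indicator_of_notMem hy', Set.indicator_of_notMem (fun h => hy h.1)]
    · rw [← Measure.volume_eq_prod]
      refine (Complex.volume_preserving_equiv_real_prod.symm
        _).integrable_comp_of_integrable (g := {z : ℂ | 0 < z.im}.indicator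
          fun z => (2 * I * dbar0 α z) • T z) ?_
      rw [integrable_indicator_iff hm]
      have hi : IntegrableOn (fun z => (2 * I * dbar0 α z) • T z)
          (Set.uIcc (-L) L ×ℂ Set.uIcc 0 L) := by
        refine ContinuousOn.integrableOn_compact hcomp ?_
        exact (by fun_prop : Continuous fun z => 2 * I * dbar0 α z).continuousOn.smul hTc
      refine hi.of_forall_sdiff_eq_zero hm ?_
      rintro z ⟨hz, hn⟩
      have hz' : 0 < z.im := hz
      rw [hdz z]
      · simp
      by_contra hcon
      push Not at hcon
      apply hn
      rw [Complex.mem_reProdIm, Set.uIcc_of_le hL0.le, Set.uIcc_of_le (by linarith)]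
      have h1 := abs_lt.1 hcon.1
      have h2 := abs_lt.1 hcon.2
      exact ⟨⟨h1.1.le, h1.2.le⟩, ⟨hz'.le, h2.2.le⟩⟩
  rw [e1, e2] at hrect
  rw [hrect, ← integral_smul]
  congr 1; ext z
  rw [smul_smul]
  congr 1
  linear_combination (dbar0 α z) * I_mul_I

variable [CompleteSpace A]

lemma green_full {R : ℂ → A} (hR : IsRes R) {ε : ℝ} (hε : 0 < ε) (hε1 : ε ≤ 1)
    {α : ℂ → ℂ} (hα : ContDiff ℝ 1 α) {M : ℝ} (hM : ∀ z, M < ‖z‖ → α z = 0) :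
    Integrable (fun z => dbar0 α z • R (sh ε z)) ∧ 
    ∫ z, dbar0 α z • R (sh ε z) =
      (-I / 2) • ∫ x : ℝ, α x • (R (x + ε * I) - R (x - ε * I)) := by
  have hgint : Integrable (fun z => dbar0 α z • R (sh ε z)) :=
    integrable_smul_bdd (dbar0_continuous hα) (dbar0_zero_of hM) (sh_meas hR hε)
      (sh_bdd hR M hε hε1)
  refine ⟨hgint, ?_⟩
  have hm : MeasurableSet {z : ℂ | 0 < z.im} := measurableSet_lt measurable_const measurable_im
  rw [← integral_add_compl hm hgint]
  have hup := green_upper (T := fun z => R (z + ε * I)) hα hM (by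
    intro z hz
    refine (hR.diff (z + ε * I) ?_).comp z (by fun_prop)
    simp; linarith)
  have hlow := green_upper (T := fun z => R (-z - ε * I)) (α := fun z => α (-z))
    (hα.comp contDiff_neg) (M := M) (fun z hz => hM _ (by rwa [norm_neg])) (by
    intro z hz
    refine DifferentiableAt.comp (f := fun z : ℂ => -z - ε * I) z (hR.diff _ ?_) (by fun_prop)
    simp; linarith)
  have hd : ∀ z, dbar0 (fun z => α (-z)) z = - dbar0 α (-z) := by
    intro z
    have : fderiv ℝ (fun z => α (-z)) z = -(fderiv ℝ α (-z)) := by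
      have h2 := ((hα.differentiable (by norm_num)) (-z)).hasFDerivAt
      have := h2.comp z ((hasFDerivAt_id (𝕜 := ℝ) z).fun_neg)
      have := this.fderiv
      simp only [Function.comp_def] at this
      rw [this]; ext <;> simp
    simp only [dbar0, this]
    simp; ring
  have e1 : ∫ z in {z : ℂ | 0 < z.im}, dbar0 α z • R (sh ε z) =
      ∫ z in {z : ℂ | 0 < z.im}, dbar0 α z • R (z + ε * I) := by
    refine setIntegral_congr_fun hm fun z hz => ?_
    have hz' : 0 < z.im := hz
    simp [sh, hz']
  have e2 : ∫ z in {z : ℂ | 0 < z.im}ᶜ, dbar0 α z • R (sh ε z) =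
      -∫ z in {z : ℂ | 0 < z.im}, dbar0 (fun z => α (-z)) z • R (-z - ε * I) := by
    rw [← integral_indicator hm, ← integral_indicator hm.compl, ← integral_neg_eq_self,
      ← integral_neg]
    refine integral_congr_ae ?_
    filter_upwards [ae_im_ne] with z hz
    by_cases h : 0 < z.im
    · have h1 : -z ∈ {z : ℂ | 0 < z.im}ᶜ := by simp; exact h.le
      have h2 : z ∈ {z : ℂ | 0 < z.im} := h
      rw [Set.indicator_of_mem h1, Set.indicator_of_mem h2, hd]
      have : ¬ (0 < (-z).im) := by simp; exact h.le
      simp only [sh, this, if_false]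
      rw [neg_smul, neg_neg]
    · have h1 : -z ∉ {z : ℂ | 0 < z.im}ᶜ := by
        simp; exact lt_of_le_of_ne (not_lt.1 h) hz
      have h2 : z ∉ {z : ℂ | 0 < z.im} := h
      rw [Set.indicator_of_notMem h1, Set.indicator_of_notMem h2, neg_zero]
  have e3 : ∫ x : ℝ, α (-x) • R (-x - ε * I) = ∫ x : ℝ, α x • R (x - ε * I) := by
    rw [← integral_neg_eq_self]
    simp
  have hcu : Continuous fun x : ℝ => R (x + ε * I) := by
    rw [continuous_iff_continuousAt]
    intro x
    refine ContinuousAt.comp (f := fun x : ℝ => (x + ε * I : ℂ)) (hR.diff _ ?_).continuousAt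
      (by fun_prop)
    simp; linarith
  have hcl : Continuous fun x : ℝ => R (x - ε * I) := by
    rw [continuous_iff_continuousAt]
    intro x
    refine ContinuousAt.comp (f := fun x : ℝ => (x - ε * I : ℂ)) (hR.diff _ ?_).continuousAt
      (by fun_prop)
    simp; linarith
  have hαc := hα.continuous
  have hs : ∀ x : ℝ, M < ‖x‖ → α x = 0 := fun x hx => hM _ (by rwa [Complex.norm_real])
  rw [e1, e2, hup, hlow, e3, ← smul_neg, ← smul_add, ← sub_eq_add_neg, ← integral_sub]
  · simp only [smul_sub]
  · exact integrable_of_cs ((hαc.comp Complex.continuous_ofReal).smul hcu) ⟨M, fun x hx => by rw [hs x hx, zero_smul]⟩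
  · exact integrable_of_cs ((hαc.comp Complex.continuous_ofReal).smul hcl) ⟨M, fun x hx => by rw [hs x hx, zero_smul]⟩
end



section
variable {F G : ℂ × ℂ → ℂ}

lemma dbar1_smooth (hF : ContDiff ℝ (⊤ : ℕ∞) F) : ContDiff ℝ (⊤ : ℕ∞) (dbar1 F) := by
  have h : ContDiff ℝ (⊤ : ℕ∞) (fderiv ℝ F) := hF.fderiv_right (by norm_cast)
  unfold dbar1
  exact ((h.clm_apply contDiff_const).add
    (contDiff_const.mul (h.clm_apply contDiff_const))).div_const 2

lemma dbar2_smooth (hF : ContDiff ℝ (⊤ : ℕ∞) F) : ContDiff ℝ (⊤ : ℕ∞) (dbar2 F) := by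
  have h : ContDiff ℝ (⊤ : ℕ∞) (fderiv ℝ F) := hF.fderiv_right (by norm_cast)
  unfold dbar2
  exact ((h.clm_apply contDiff_const).add
    (contDiff_const.mul (h.clm_apply contDiff_const))).div_const 2

lemma dbar12_smooth (hF : ContDiff ℝ (⊤ : ℕ∞) F) : ContDiff ℝ (⊤ : ℕ∞) (dbar12 F) :=
  dbar1_smooth (dbar2_smooth hF)

lemma sm_diff (hF : ContDiff ℝ (⊤ : ℕ∞) F) (z : ℂ × ℂ) : DifferentiableAt ℝ F z :=
  (hF.differentiable (by simp)) z

lemma dbar0_slice1 (hF : ContDiff ℝ (⊤ : ℕ∞) F) (z w : ℂ) :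
    dbar0 (fun z => F (z, w)) z = dbar1 F (z, w) := by
  have h : HasFDerivAt (fun z => F (z, w)) ((fderiv ℝ F (z, w)).comp
      (ContinuousLinearMap.inl ℝ ℂ ℂ)) z :=
    HasFDerivAt.comp (f := fun z : ℂ => (z, w)) z (sm_diff hF (z, w)).hasFDerivAt
      (hasFDerivAt_prodMk_left z w)
  unfold dbar0 dbar1
  rw [h.fderiv]
  simp

lemma dbar0_slice2 (hF : ContDiff ℝ (⊤ : ℕ∞) F) (z w : ℂ) :
    dbar0 (fun w => F (z, w)) w = dbar2 F (z, w) := by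
  have h : HasFDerivAt (fun w => F (z, w)) ((fderiv ℝ F (z, w)).comp
      (ContinuousLinearMap.inr ℝ ℂ ℂ)) w :=
    HasFDerivAt.comp (f := fun w : ℂ => (z, w)) w (sm_diff hF (z, w)).hasFDerivAt
      (hasFDerivAt_prodMk_right z w)
  unfold dbar0 dbar2
  rw [h.fderiv]
  simp

lemma slice1_smooth (hF : ContDiff ℝ (⊤ : ℕ∞) F) (w : ℂ) : ContDiff ℝ 1 (fun z => F (z, w)) :=
  (hF.of_le (by norm_cast)).comp (contDiff_id.prodMk contDiff_const)

lemma slice2_smooth (hF : ContDiff ℝ (⊤ : ℕ∞) F) (z : ℂ) : ContDiff ℝ 1 (fun w => F (z, w)) :=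
  (hF.of_le (by norm_cast)).comp (contDiff_const.prodMk contDiff_id)

lemma dbar12_symm (hF : ContDiff ℝ (⊤ : ℕ∞) F) (z : ℂ × ℂ) :
    dbar2 (dbar1 F) z = dbar12 F z := by
  have h : ContDiff ℝ (⊤ : ℕ∞) (fderiv ℝ F) := hF.fderiv_right (by norm_cast)
  have hd : HasFDerivAt (fderiv ℝ F) (fderiv ℝ (fderiv ℝ F) z) z :=
    (h.differentiable (by simp) z).hasFDerivAt
  have hs : IsSymmSndFDerivAt ℝ F z := by
    refine ContDiffAt.isSymmSndFDerivAt (n := (⊤ : ℕ∞)) hF.contDiffAt ?_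
    simp only [minSmoothness_of_isRCLikeNormedField]
    norm_cast
  have key : ∀ u v : ℂ × ℂ, HasFDerivAt (fun x => (fderiv ℝ F x u + I * fderiv ℝ F x v) / 2)
      ((2:ℂ)⁻¹ • ((fderiv ℝ (fderiv ℝ F) z).flip u + I • (fderiv ℝ (fderiv ℝ F) z).flip v)) z := by
    intro u v
    have hap : ∀ u, HasFDerivAt (fun x => fderiv ℝ F x u) ((fderiv ℝ (fderiv ℝ F) z).flip u) z := by
      intro u
      have := hd.clm_apply (hasFDerivAt_const u z)
      simpa using this
    have := ((hap u).add ((hap v).const_mul I)).const_mul (2:ℂ)⁻¹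
    refine this.congr_of_eventuallyEq (Filter.Eventually.of_forall fun x => ?_)
    simp; ring
  have e1 := (key (1,0) (I,0)).fderiv
  have e2 := (key (0,1) (0,I)).fderiv
  unfold dbar12
  have f1 : dbar2 (dbar1 F) z = (fderiv ℝ (fun x => (fderiv ℝ F x (1,0) + I * fderiv ℝ F x (I,0)) / 2) z (0, 1) + I * fderiv ℝ (fun x => (fderiv ℝ F x (1,0) + I * fderiv ℝ F x (I,0)) / 2) z (0, I)) / 2 := rfl
  have f2 : dbar1 (fun w => dbar2 F w) z = (fderiv ℝ (fun x => (fderiv ℝ F x (0,1) + I * fderiv ℝ F x (0,I)) / 2) z (1,0) + I * fderiv ℝ (fun x => (fderiv ℝ F x (0,1) + I * fderiv ℝ F x (0,I)) / 2) z (I, 0)) / 2 := rfl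
  rw [f1, f2, e1, e2]
  simp only [smul_apply, add_apply, ContinuousLinearMap.flip_apply, smul_eq_mul]
  rw [hs.eq (0,1) (1,0), hs.eq (0,1) (I,0), hs.eq (0,I) (1,0), hs.eq (0,I) (I,0)]
  ring

lemma dbar1_mul (hF : ContDiff ℝ (⊤ : ℕ∞) F) (hG : ContDiff ℝ (⊤ : ℕ∞) G) (z : ℂ × ℂ) :
    dbar1 (fun z => F z * G z) z = dbar1 F z * G z + F z * dbar1 G z := by
  unfold dbar1
  rw [fderiv_fun_mul (sm_diff hF z) (sm_diff hG z)]
  simp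
  ring

lemma dbar2_mul (hF : ContDiff ℝ (⊤ : ℕ∞) F) (hG : ContDiff ℝ (⊤ : ℕ∞) G) (z : ℂ × ℂ) :
    dbar2 (fun z => F z * G z) z = dbar2 F z * G z + F z * dbar2 G z := by
  unfold dbar2
  rw [fderiv_fun_mul (sm_diff hF z) (sm_diff hG z)]
  simp
  ring

lemma dbar1_add (hF : ContDiff ℝ (⊤ : ℕ∞) F) (hG : ContDiff ℝ (⊤ : ℕ∞) G) (z : ℂ × ℂ) :
    dbar1 (fun z => F z + G z) z = dbar1 F z + dbar1 G z := by
  unfold dbar1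
  rw [fderiv_fun_add (sm_diff hF z) (sm_diff hG z)]
  simp
  ring

lemma dbar1_sub (hF : ContDiff ℝ (⊤ : ℕ∞) F) (hG : ContDiff ℝ (⊤ : ℕ∞) G) (z : ℂ × ℂ) :
    dbar1 (fun z => F z - G z) z = dbar1 F z - dbar1 G z := by
  unfold dbar1
  rw [fderiv_fun_sub (sm_diff hF z) (sm_diff hG z)]
  simp
  ring

lemma dbar2_sub (hF : ContDiff ℝ (⊤ : ℕ∞) F) (hG : ContDiff ℝ (⊤ : ℕ∞) G) (z : ℂ × ℂ) :
    dbar2 (fun z => F z - G z) z = dbar2 F z - dbar2 G z := by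
  unfold dbar2
  rw [fderiv_fun_sub (sm_diff hF z) (sm_diff hG z)]
  simp
  ring

lemma dbar12_sub (hF : ContDiff ℝ (⊤ : ℕ∞) F) (hG : ContDiff ℝ (⊤ : ℕ∞) G) (z : ℂ × ℂ) :
    dbar12 (fun z => F z - G z) z = dbar12 F z - dbar12 G z := by
  unfold dbar12
  rw [funext (dbar2_sub hF hG)]
  exact dbar1_sub (dbar2_smooth hF) (dbar2_smooth hG) z

lemma dbar12_mul (hF : ContDiff ℝ (⊤ : ℕ∞) F) (hG : ContDiff ℝ (⊤ : ℕ∞) G) (z : ℂ × ℂ) :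
    dbar12 (fun z => F z * G z) z = (dbar12 F z * G z + dbar1 F z * dbar2 G z)
      + (dbar2 F z * dbar1 G z + F z * dbar12 G z) := by
  have h2F := dbar2_smooth hF
  have h2G := dbar2_smooth hG
  unfold dbar12
  rw [funext (dbar2_mul hF hG), dbar1_add (h2F.mul hG) (hF.mul h2G), dbar1_mul h2F hG,
    dbar1_mul hF h2G]
  ring

lemma fd_zero {M : ℝ} (h : ∀ z, M < ‖z‖ → F z = 0) (z : ℂ × ℂ) (hz : M < ‖z‖) :
    fderiv ℝ F z = 0 := by
  have : F =ᶠ[nhds z] fun _ => 0 := by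
    filter_upwards [(isOpen_lt continuous_const continuous_norm).mem_nhds hz] with w hw
    exact h w hw
  rw [this.fderiv_eq]; simp

lemma dbar1_supp {M : ℝ} (h : ∀ z, M < ‖z‖ → F z = 0) (z : ℂ × ℂ) (hz : M < ‖z‖) :
    dbar1 F z = 0 := by
  unfold dbar1; rw [fd_zero h z hz]; simp

lemma dbar2_supp {M : ℝ} (h : ∀ z, M < ‖z‖ → F z = 0) (z : ℂ × ℂ) (hz : M < ‖z‖) :
    dbar2 F z = 0 := by
  unfold dbar2; rw [fd_zero h z hz]; simp

lemma dbar12_supp {M : ℝ} (h : ∀ z, M < ‖z‖ → F z = 0) (z : ℂ × ℂ) (hz : M < ‖z‖) :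
    dbar12 F z = 0 := dbar1_supp (dbar2_supp h) z hz

lemma supp_slice1 {M : ℝ} (h : ∀ z, M < ‖z‖ → F z = 0) (w : ℂ) (z : ℂ) (hz : M < ‖z‖) :
    F (z, w) = 0 := h _ (hz.trans_le (norm_fst_le (z, w)))

lemma supp_slice2 {M : ℝ} (h : ∀ z, M < ‖z‖ → F z = 0) (z : ℂ) (w : ℂ) (hw : M < ‖w‖) :
    F (z, w) = 0 := h _ (hw.trans_le (norm_snd_le (z, w)))

end



section
variable {A : Type*} [NormedRing A] [NormedAlgebra ℂ A] [CompleteSpace A]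

lemma indep_eps_int {R₁ R₂ : ℂ → A} (h1 : IsRes R₁) (h2 : IsRes R₂) {φ : ℂ × ℂ → ℂ}
    (hφ : Continuous φ) {M : ℝ} (hM : ∀ z, M < ‖z‖ → φ z = 0)
    {ε : ℝ} (hε : 0 < ε) (hε1 : ε ≤ 1) :
    Integrable (fun z : ℂ × ℂ => φ z • (R₁ (sh ε z.1) * R₂ (sh ε z.2)))
      (volume.prod volume) := by
  obtain ⟨C1, hC1⟩ := sh_bdd h1 M hε hε1
  obtain ⟨C2, hC2⟩ := sh_bdd h2 M hε hε1
  refine integrable_smul_bdd hφ hM ?_ ⟨C1 * C2, fun z hz => ?_⟩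
  · exact (sh_meas h1 hε).comp_fst.mul (sh_meas h2 hε).comp_snd
  · refine (norm_mul_le _ _).trans ?_
    have a := hC1 z.1 ((norm_fst_le z).trans hz)
    have b := hC2 z.2 ((norm_snd_le z).trans hz)
    have : 0 ≤ C1 := (norm_nonneg _).trans a
    gcongr

lemma indep_eps {R₁ R₂ : ℂ → A} (h1 : IsRes R₁) (h2 : IsRes R₂) {K : ℂ × ℂ → ℂ}
    (hK : ContDiff ℝ (⊤ : ℕ∞) K) {M : ℝ} (hM : ∀ z, M < ‖z‖ → K z = 0)
    (hreal : ∀ x y : ℝ, K (x, y) = 0) {ε : ℝ} (hε : 0 < ε) (hε1 : ε ≤ 1) :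
    ∫ z : ℂ × ℂ, dbar12 K z • (R₁ (sh ε z.1) * R₂ (sh ε z.2)) = 0 := by
  have hK2 := dbar2_smooth hK
  have hM2 := dbar2_supp hM
  obtain ⟨D, hD⟩ : ∃ D : ℝ → A, D = fun x : ℝ =>
    (-I / 2) • (R₁ (x + ε * I) - R₁ (x - ε * I)) := ⟨_, rfl⟩
  have hDc : Continuous D := by
    rw [hD, continuous_iff_continuousAt]
    intro x
    refine ContinuousAt.const_smul (ContinuousAt.sub ?_ ?_) _
    · refine ContinuousAt.comp (f := fun x : ℝ => (x:ℂ) + ε * I)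
        (h1.diff _ ?_).continuousAt (by fun_prop)
      simp [hε.ne']
    · refine ContinuousAt.comp (f := fun x : ℝ => (x:ℂ) - ε * I)
        (h1.diff _ ?_).continuousAt (by fun_prop)
      simp [hε.ne']
  rw [Measure.volume_eq_prod, integral_prod_symm _
    (indep_eps_int h1 h2 (dbar12_smooth hK).continuous (dbar12_supp hM) hε hε1)]
  have inner : ∀ w : ℂ, ∫ z : ℂ, dbar12 K (z, w) • (R₁ (sh ε z) * R₂ (sh ε w))
      = ∫ x : ℝ, dbar2 K (x, w) • (D x * R₂ (sh ε w)) := by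
    intro w
    obtain ⟨gi, ge⟩ := green_full h1 hε hε1 (slice1_smooth hK2 w) (supp_slice1 hM2 w)
    have e : ∀ z, dbar12 K (z, w) • (R₁ (sh ε z) * R₂ (sh ε w)) =
        (dbar0 (fun z => dbar2 K (z, w)) z • R₁ (sh ε z)) * R₂ (sh ε w) := by
      intro z
      rw [dbar0_slice1 hK2, smul_mul_assoc]; rfl
    simp_rw [e]
    rw [integral_mul_const_of_integrable gi, ge, ← integral_smul, ← integral_mul_const_of_integrable]
    · refine integral_congr_ae (Filter.Eventually.of_forall fun x => ?_)
      simp only [hD]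
      rw [smul_comm, smul_mul_assoc]
    · have : (fun x : ℝ => (-I / 2) • dbar2 K ((x:ℂ), w) • (R₁ (x + ε * I) - R₁ (x - ε * I))) =
          fun x : ℝ => dbar2 K ((x:ℂ), w) • D x := by
        ext x; rw [hD, smul_comm]
      rw [this]
      refine integrable_of_cs ?_ ⟨M, fun x hx => ?_⟩
      · have := hK2.continuous
        exact (by fun_prop : Continuous fun x : ℝ => dbar2 K ((x:ℂ), w)).smul hDc
      · rw [supp_slice1 hM2 w (x:ℂ) (by simpa using hx), zero_smul]
  simp_rw [inner]
  rw [integral_integral_swap]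
  · have z : ∀ x : ℝ, ∫ w : ℂ, dbar2 K (x, w) • (D x * R₂ (sh ε w)) = 0 := by
      intro x
      obtain ⟨gi, ge⟩ := green_full h2 hε hε1 (slice2_smooth hK x) (supp_slice2 hM x)
      have e : ∀ w, dbar2 K (x, w) • (D x * R₂ (sh ε w)) =
          D x * (dbar0 (fun w => K (x, w)) w • R₂ (sh ε w)) := by
        intro w
        rw [dbar0_slice2 hK, mul_smul_comm]
      simp_rw [e]
      rw [integral_const_mul_of_integrable gi, ge]
      simp [hreal]
    simp [z]
  · have hc := hK2.continuous
    obtain ⟨C1, -, hC1⟩ := bdd_on_ball hDc M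
    obtain ⟨C2, hC2⟩ := sh_bdd h2 M hε hε1
    refine integrable_smul_bdd (X := ℂ × ℝ) (φ := fun p : ℂ × ℝ => dbar2 K ((p.2:ℂ), p.1))
      (T := fun p : ℂ × ℝ => D p.2 * R₂ (sh ε p.1)) (M := M) ?_ ?_ ?_ ?_
    · fun_prop
    · intro p hp
      apply hM2
      simpa [Prod.norm_def, or_comm] using hp
    · exact (hDc.aestronglyMeasurable.comp_snd).mul (sh_meas h2 hε).comp_fst
    · refine ⟨C1 * C2, fun p hp => ?_⟩
      refine (norm_mul_le _ _).trans ?_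
      have a := hC1 p.2 ((norm_snd_le p).trans hp)
      have b := hC2 p.1 ((norm_fst_le p).trans hp)
      have : 0 ≤ C1 := (norm_nonneg _).trans a
      gcongr

lemma sh_tendsto {R : ℂ → A} (hR : IsRes R) {z : ℂ} (hz : z.im ≠ 0) :
    Filter.Tendsto (fun n : ℕ => R (sh (1 / ((n:ℝ) + 1)) z)) Filter.atTop (nhds (R z)) := by
  refine (hR.diff z hz).continuousAt.tendsto.comp ?_
  have h0 : Filter.Tendsto (fun n : ℕ => (1 / ((n:ℝ) + 1))) Filter.atTop (nhds 0) :=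
    tendsto_one_div_add_atTop_nhds_zero_nat
  have h1 : Filter.Tendsto (fun n : ℕ => (((1 / ((n:ℝ) + 1) : ℝ) : ℂ)) * I) Filter.atTop
      (nhds 0) := by
    have := ((continuous_ofReal.tendsto 0).comp h0).mul_const I
    simpa [Function.comp_def] using this
  unfold sh
  split_ifs
  · simpa using h1.const_add z
  · simpa using h1.const_sub z

lemma indep {R₁ R₂ : ℂ → A} (h1 : IsRes R₁) (h2 : IsRes R₂) {K : ℂ × ℂ → ℂ}
    (hK : ContDiff ℝ (⊤ : ℕ∞) K) {M : ℝ} (hM : ∀ z, M < ‖z‖ → K z = 0)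
    (hreal : ∀ x y : ℝ, K (x, y) = 0)
    (hg : Good (fun z : ℂ × ℂ => |z.1.im| * |z.2.im|) (dbar12 K)) :
    ∫ z : ℂ × ℂ, dbar12 K z • (R₁ z.1 * R₂ z.2) = 0 := by
  obtain ⟨C1, hC10, n1, hC1⟩ := sh_temp h1 M
  obtain ⟨C2, hC20, n2, hC2⟩ := sh_temp h2 M
  obtain ⟨C, hC0, hC⟩ := hg.flat (n1 + n2)
  have hMM := dbar12_supp hM
  have heps : ∀ n : ℕ, 0 < 1 / ((n:ℝ) + 1) ∧ 1 / ((n:ℝ) + 1) ≤ 1 := fun n =>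
    ⟨by positivity, by rw [div_le_one (by positivity)]; linarith [(n.cast_nonneg : (0:ℝ) ≤ n)]⟩
  have hlim := tendsto_integral_of_dominated_convergence (μ := (volume : Measure (ℂ × ℂ)))
    (F := fun (n : ℕ) (z : ℂ × ℂ) => dbar12 K z • (R₁ (sh (1 / ((n:ℝ) + 1)) z.1) *
      R₂ (sh (1 / ((n:ℝ) + 1)) z.2)))
    (f := fun z => dbar12 K z • (R₁ z.1 * R₂ z.2))
    ((Metric.closedBall (0 : ℂ × ℂ) M).indicator fun _ => C * C1 * C2 * |M| ^ (n1 + n2)) ?_ ?_ ?_ ?_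
  · refine tendsto_nhds_unique hlim ?_
    simp_rw [fun n : ℕ => indep_eps h1 h2 hK hM hreal (heps n).1 (heps n).2]
    exact tendsto_const_nhds
  · intro n
    exact (indep_eps_int h1 h2 (dbar12_smooth hK).continuous hMM
      (heps n).1 (heps n).2).aestronglyMeasurable
  · rw [integrable_indicator_iff measurableSet_closedBall]
    exact integrableOn_const (measure_closedBall_lt_top.ne)
  · intro n
    refine Filter.Eventually.of_forall fun z => ?_
    by_cases hz : M < ‖z‖
    · rw [hMM z hz, zero_smul, norm_zero]
      exact Set.indicator_nonneg (fun _ _ => by positivity) _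
    · push Not at hz
      rw [Set.indicator_of_mem (by simpa using hz), norm_smul]
      obtain ⟨e0, e1⟩ := heps n
      have z1 := (norm_fst_le z).trans hz
      have z2 := (norm_snd_le z).trans hz
      have a := hC1 _ e0 e1 z.1 z1
      have b := hC2 _ e0 e1 z.2 z2
      have y1 : |z.1.im| ≤ |M| := ((abs_im_le_norm _).trans z1).trans (le_abs_self _)
      have y2 : |z.2.im| ≤ |M| := ((abs_im_le_norm _).trans z2).trans (le_abs_self _)
      set r1 := ‖R₁ (sh (1 / ((n:ℝ) + 1)) z.1)‖
      set r2 := ‖R₂ (sh (1 / ((n:ℝ) + 1)) z.2)‖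
      have a' : r1 * |z.1.im| ^ n1 ≤ C1 := le_trans (by gcongr; linarith) a
      have b' : r2 * |z.2.im| ^ n2 ≤ C2 := le_trans (by gcongr; linarith) b
      have hz' : ‖dbar12 K z‖ ≤ C * (|z.1.im| * |z.2.im|) ^ (n1 + n2) := hC z
      calc _ ≤ (C * (|z.1.im| * |z.2.im|) ^ (n1 + n2)) * (r1 * r2) := by
            gcongr
            exact norm_mul_le _ _
        _ = C * (r1 * |z.1.im| ^ n1) * (r2 * |z.2.im| ^ n2) * (|z.1.im| ^ n2 * |z.2.im| ^ n1) := by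
            ring
        _ ≤ C * C1 * C2 * (|M| ^ n2 * |M| ^ n1) := by gcongr
        _ = _ := by ring
  · have a1 : ∀ᵐ z : ℂ × ℂ, z.1.im ≠ 0 := Measure.quasiMeasurePreserving_fst.ae ae_im_ne
    have a2 : ∀ᵐ z : ℂ × ℂ, z.2.im ≠ 0 := Measure.quasiMeasurePreserving_snd.ae ae_im_ne
    filter_upwards [a1, a2] with z z1 z2
    exact ((sh_tendsto h1 z1).mul (sh_tendsto h2 z2)).const_smul _

end



/-- Smooth, compactly supported functions with the special flatness estimates. -/
structure AH (F : ℂ × ℂ → ℂ) : Prop where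
  smooth : ContDiff ℝ (⊤ : ℕ∞) F
  supp : ∃ M : ℝ, ∀ z, M < ‖z‖ → F z = 0
  f1 : ∀ N : ℕ, ∃ C : ℝ, 0 ≤ C ∧ ∀ z, ‖dbar1 F z‖ ≤ C * |z.1.im| ^ N
  f2 : ∀ N : ℕ, ∃ C : ℝ, 0 ≤ C ∧ ∀ z, ‖dbar2 F z‖ ≤ C * |z.2.im| ^ N
  f12 : ∀ N : ℕ, ∃ C : ℝ, 0 ≤ C ∧ ∀ z, ‖dbar12 F z‖ ≤ C * (|z.1.im| * |z.2.im|) ^ N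

lemma AH.good {F : ℂ × ℂ → ℂ} (hF : AH F) :
    Good (fun z : ℂ × ℂ => |z.1.im| * |z.2.im|) (dbar12 F) :=
  ⟨(dbar12_smooth hF.smooth).continuous, ⟨hF.supp.choose, dbar12_supp hF.supp.choose_spec⟩, hF.f12⟩

section
variable {A : Type*} [NormedRing A] [NormedAlgebra ℂ A]

lemma good_one {R : ℂ → A} (hR : IsRes R) {φ : ℂ → ℂ} (hφ : Good (fun z : ℂ => |z.im|) φ) :
    Good (fun z : ℂ => |z.im|) (fun z => φ z • R z) := by
  have := (hφ.smul_one (A := A)).mul_res hR continuous_id (continuous_const (y := (1:ℝ)))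
    (fun _ => zero_le_one) (fun x => by simp)
  simpa using this

lemma good_two {R₁ R₂ : ℂ → A} (h1 : IsRes R₁) (h2 : IsRes R₂) {φ : ℂ × ℂ → ℂ}
    (hφ : Good (fun z : ℂ × ℂ => |z.1.im| * |z.2.im|) φ) :
    Good (fun z : ℂ × ℂ => |z.1.im| * |z.2.im|) (fun z => φ z • (R₁ z.1 * R₂ z.2)) := by
  have := ((hφ.smul_one (A := A)).mul_res h1 continuous_fst
    (w := fun z : ℂ × ℂ => |z.2.im|) (by fun_prop)
    (fun _ => abs_nonneg _) (fun x => rfl)).mul_res h2 continuous_snd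
    (w := fun z : ℂ × ℂ => |z.1.im|) (by fun_prop)
    (fun _ => abs_nonneg _) (fun x => mul_comm _ _)
  simpa using this

lemma good_three {R₁ R₂ : ℂ → A} (h1 : IsRes R₁) (h2 : IsRes R₂) {φ : (ℂ × ℂ) × ℂ → ℂ}
    (hφ : Good (fun p : (ℂ × ℂ) × ℂ => |p.2.im| * (|p.1.1.im| * |p.1.2.im|)) φ) :
    Good (fun p : (ℂ × ℂ) × ℂ => |p.2.im| * (|p.1.1.im| * |p.1.2.im|))
      (fun p => φ p • (R₁ p.2 * (R₂ p.1.1 * R₂ p.1.2))) := by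
  have := (((hφ.smul_one (A := A)).mul_res h1 continuous_snd
    (w := fun p : (ℂ × ℂ) × ℂ => |p.1.1.im| * |p.1.2.im|) (by fun_prop)
    (fun _ => by positivity) (fun x => rfl)).mul_res h2 (c := fun p => p.1.1) (by fun_prop)
    (w := fun p : (ℂ × ℂ) × ℂ => |p.2.im| * |p.1.2.im|) (by fun_prop)
    (fun _ => by positivity) (fun x => by ring)).mul_res h2 (c := fun p => p.1.2) (by fun_prop)
    (w := fun p : (ℂ × ℂ) × ℂ => |p.2.im| * |p.1.1.im|) (by fun_prop)
    (fun _ => by positivity) (fun x => by ring)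
  simpa [mul_assoc] using this

variable {F G : ℂ × ℂ → ℂ}

lemma AH.flat_a1 (hF : AH F) (w : ℂ) (N : ℕ) : ∃ C : ℝ, 0 ≤ C ∧ ∀ z,
    ‖dbar0 (fun z => dbar2 F (z, w)) z‖ ≤ C * |z.im| ^ N := by
  obtain ⟨C, hC, h⟩ := hF.f12 N
  refine ⟨C * |w.im| ^ N, by positivity, fun z => ?_⟩
  rw [dbar0_slice1 (dbar2_smooth hF.smooth)]
  refine (h (z, w)).trans (le_of_eq ?_)
  simp only [mul_pow]; ring

lemma AH.flat_a2 (hF : AH F) (z : ℂ) (N : ℕ) : ∃ C : ℝ, 0 ≤ C ∧ ∀ w,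
    ‖dbar0 (fun w => dbar1 F (z, w)) w‖ ≤ C * |w.im| ^ N := by
  obtain ⟨C, hC, h⟩ := hF.f12 N
  refine ⟨C * |z.im| ^ N, by positivity, fun w => ?_⟩
  rw [dbar0_slice2 (dbar1_smooth hF.smooth), dbar12_symm hF.smooth]
  refine (h (z, w)).trans (le_of_eq ?_)
  simp only [mul_pow]; ring

lemma AH.flat_b2 (hF : AH F) (z : ℂ) (N : ℕ) : ∃ C : ℝ, 0 ≤ C ∧ ∀ w,
    ‖dbar0 (fun w => F (z, w)) w‖ ≤ C * |w.im| ^ N := by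
  obtain ⟨C, hC, h⟩ := hF.f2 N
  refine ⟨C, hC, fun w => ?_⟩
  rw [dbar0_slice2 hF.smooth]
  exact h (z, w)

lemma AH.s2 (hF : AH F) (z : ℂ) : ∃ M : ℝ, ∀ w, M < ‖w‖ → F (z, w) = 0 :=
  ⟨hF.supp.choose, supp_slice2 hF.supp.choose_spec z⟩
lemma AH.s2' (hF : AH F) (z : ℂ) : ∃ M : ℝ, ∀ w, M < ‖w‖ → dbar1 F (z, w) = 0 :=
  ⟨hF.supp.choose, supp_slice2 (dbar1_supp hF.supp.choose_spec) z⟩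
lemma AH.s1' (hF : AH F) (w : ℂ) : ∃ M : ℝ, ∀ z, M < ‖z‖ → dbar2 F (z, w) = 0 :=
  ⟨hF.supp.choose, supp_slice1 (dbar2_supp hF.supp.choose_spec) w⟩

lemma AH.int1 (hF : AH F) {R : ℂ → A} (hR : IsRes R) (w : ℂ) :
    Integrable (fun z => dbar12 F (z, w) • R z) := by
  have g : Good (fun z : ℂ => |z.im|) (dbar0 fun z => dbar2 F (z, w)) :=
    ⟨dbar0_continuous (slice1_smooth (dbar2_smooth hF.smooth) w),
      ⟨_, dbar0_zero_of (hF.s1' w).choose_spec⟩, hF.flat_a1 w⟩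
  have := (good_one hR g).integrable (μ := volume)
  simp_rw [dbar0_slice1 (dbar2_smooth hF.smooth)] at this
  exact this

lemma Good.mulc {φ ψ : ℂ → ℂ} {W : ℂ → ℝ} (hφ : Good W φ) (hW : ∀ x, 0 ≤ W x)
    (hψ : Continuous ψ) : Good W (fun z => φ z * ψ z) := by
  obtain ⟨M, hM⟩ := hφ.supp
  refine ⟨hφ.cont.mul hψ, ⟨M, fun x hx => by rw [hM x hx, zero_mul]⟩, fun N => ?_⟩
  obtain ⟨C, hC0, hC⟩ := hφ.flat N
  obtain ⟨D, hD0, hD⟩ := bdd_on_ball hψ M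
  refine ⟨C * D, by positivity, fun x => ?_⟩
  have hWx := hW x
  by_cases h : M < ‖x‖
  · rw [hM x h, zero_mul, norm_zero]; positivity
  · rw [norm_mul]
    calc _ ≤ (C * W x ^ N) * D := by
          gcongr
          exacts [hC x, hD x (not_lt.1 h)]
      _ = _ := by ring

lemma AH.g2 (hF : AH F) (z : ℂ) : Good (fun z : ℂ => |z.im|) (fun w => dbar12 F (z, w)) := by
  have g : Good (fun z : ℂ => |z.im|) (dbar0 fun w => dbar1 F (z, w)) :=
    ⟨dbar0_continuous (slice2_smooth (dbar1_smooth hF.smooth) z),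
      ⟨_, dbar0_zero_of (hF.s2' z).choose_spec⟩, hF.flat_a2 z⟩
  have e : (dbar0 fun w => dbar1 F (z, w)) = fun w => dbar12 F (z, w) := by
    ext w
    rw [dbar0_slice2 (dbar1_smooth hF.smooth), dbar12_symm hF.smooth]
  rwa [e] at g

lemma AH.g2' (hF : AH F) (z : ℂ) : Good (fun z : ℂ => |z.im|) (fun w => dbar2 F (z, w)) := by
  have g : Good (fun z : ℂ => |z.im|) (dbar0 fun w => F (z, w)) :=
    ⟨dbar0_continuous (slice2_smooth hF.smooth z),
      ⟨_, dbar0_zero_of (hF.s2 z).choose_spec⟩, hF.flat_b2 z⟩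
  have e : (dbar0 fun w => F (z, w)) = fun w => dbar2 F (z, w) := by
    ext w
    rw [dbar0_slice2 hF.smooth]
  rwa [e] at g

lemma AH.int2 (hF : AH F) {R : ℂ → A} (hR : IsRes R) (z : ℂ) :
    Integrable (fun w => dbar12 F (z, w) • R w) := (good_one hR (hF.g2 z)).integrable

lemma AH.int2' (hF : AH F) {R : ℂ → A} (hR : IsRes R) (z : ℂ) :
    Integrable (fun w => dbar2 F (z, w) • R w) := (good_one hR (hF.g2' z)).integrable

lemma AH.intm (hF : AH F) (hG : AH G) {R : ℂ → A} (hR : IsRes R) (z : ℂ) :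
    Integrable (fun w => (dbar12 F (z, w) * G (z, w) + dbar1 F (z, w) * dbar2 G (z, w)) • R w) := by
  have c1 := hG.smooth.continuous
  have c2 := (dbar1_smooth hF.smooth).continuous
  have a := (good_one hR ((hF.g2 z).mulc (fun x => abs_nonneg _)
    (by fun_prop : Continuous fun w => G (z, w)))).integrable (μ := volume)
  have b := (good_one hR ((hG.g2' z).mulc (fun x => abs_nonneg _)
    (by fun_prop : Continuous fun w => dbar1 F (z, w)))).integrable (μ := volume)
  refine (a.add b).congr (Filter.Eventually.of_forall fun w => ?_)
  simp only [Pi.add_apply, ← add_smul]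
  congr 1
  ring

lemma AH.mul (hF : AH F) (hG : AH G) : AH (fun z => F z * G z) := by
  have bd : ∀ {F : ℂ × ℂ → ℂ}, AH F → ∃ C : ℝ, 0 ≤ C ∧ ∀ z, ‖F z‖ ≤ C := by
    intro F hF
    obtain ⟨M, hM⟩ := hF.supp
    obtain ⟨C, hC0, hC⟩ := bdd_on_ball hF.smooth.continuous M
    refine ⟨C, hC0, fun z => ?_⟩
    by_cases h : M < ‖z‖
    · rw [hM z h, norm_zero]; exact hC0
    · exact hC z (not_lt.1 h)
  obtain ⟨BF, hBF0, hBF⟩ := bd hF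
  obtain ⟨BG, hBG0, hBG⟩ := bd hG
  refine ⟨hF.smooth.mul hG.smooth, ?_, fun N => ?_, fun N => ?_, fun N => ?_⟩
  · obtain ⟨M, hM⟩ := hF.supp
    exact ⟨M, fun z hz => by rw [hM z hz, zero_mul]⟩
  · obtain ⟨C, hC0, hC⟩ := hF.f1 N
    obtain ⟨D, hD0, hD⟩ := hG.f1 N
    refine ⟨C * BG + BF * D, by positivity, fun z => ?_⟩
    rw [dbar1_mul hF.smooth hG.smooth]
    refine (norm_add_le _ _).trans ?_
    rw [norm_mul, norm_mul]
    calc _ ≤ (C * |z.1.im| ^ N) * BG + BF * (D * |z.1.im| ^ N) := by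
          gcongr
          exacts [hC z, hBG z, hBF z, hD z]
      _ = _ := by ring
  · obtain ⟨C, hC0, hC⟩ := hF.f2 N
    obtain ⟨D, hD0, hD⟩ := hG.f2 N
    refine ⟨C * BG + BF * D, by positivity, fun z => ?_⟩
    rw [dbar2_mul hF.smooth hG.smooth]
    refine (norm_add_le _ _).trans ?_
    rw [norm_mul, norm_mul]
    calc _ ≤ (C * |z.2.im| ^ N) * BG + BF * (D * |z.2.im| ^ N) := by
          gcongr
          exacts [hC z, hBG z, hBF z, hD z]
      _ = _ := by ring
  · obtain ⟨C, hC0, hC⟩ := hF.f12 N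
    obtain ⟨D, hD0, hD⟩ := hG.f12 N
    obtain ⟨C1, hC10, hC1⟩ := hF.f1 N
    obtain ⟨D1, hD10, hD1⟩ := hG.f1 N
    obtain ⟨C2, hC20, hC2⟩ := hF.f2 N
    obtain ⟨D2, hD20, hD2⟩ := hG.f2 N
    refine ⟨(C * BG + C1 * D2) + (C2 * D1 + BF * D), by positivity, fun z => ?_⟩
    rw [dbar12_mul hF.smooth hG.smooth]
    refine (norm_add_le _ _).trans ?_
    refine (add_le_add (norm_add_le _ _) (norm_add_le _ _)).trans ?_
    simp only [norm_mul]
    calc _ ≤ ((C * (|z.1.im| * |z.2.im|) ^ N) * BG + (C1 * |z.1.im| ^ N) * (D2 * |z.2.im| ^ N))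
          + ((C2 * |z.2.im| ^ N) * (D1 * |z.1.im| ^ N)
            + BF * (D * (|z.1.im| * |z.2.im|) ^ N)) := by
          gcongr
          exacts [hC z, hBG z, hC1 z, hD2 z, hC2 z, hD1 z, hBF z, hD z]
      _ = _ := by simp only [mul_pow]; ring

lemma AH.sub (hF : AH F) (hG : AH G) : AH (fun z => F z - G z) := by
  refine ⟨hF.smooth.sub hG.smooth, ?_, fun N => ?_, fun N => ?_, fun N => ?_⟩
  · obtain ⟨M, hM⟩ := hF.supp
    obtain ⟨L, hL⟩ := hG.supp
    exact ⟨max M L, fun z hz => by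
      rw [hM z ((le_max_left _ _).trans_lt hz), hL z ((le_max_right _ _).trans_lt hz), sub_zero]⟩
  · obtain ⟨C, hC0, hC⟩ := hF.f1 N
    obtain ⟨D, hD0, hD⟩ := hG.f1 N
    refine ⟨C + D, by positivity, fun z => ?_⟩
    rw [dbar1_sub hF.smooth hG.smooth, add_mul]
    exact (norm_sub_le _ _).trans (add_le_add (hC z) (hD z))
  · obtain ⟨C, hC0, hC⟩ := hF.f2 N
    obtain ⟨D, hD0, hD⟩ := hG.f2 N
    refine ⟨C + D, by positivity, fun z => ?_⟩
    rw [dbar2_sub hF.smooth hG.smooth, add_mul]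
    exact (norm_sub_le _ _).trans (add_le_add (hC z) (hD z))
  · obtain ⟨C, hC0, hC⟩ := hF.f12 N
    obtain ⟨D, hD0, hD⟩ := hG.f12 N
    refine ⟨C + D, by positivity, fun z => ?_⟩
    rw [dbar12_sub hF.smooth hG.smooth, add_mul]
    exact (norm_sub_le _ _).trans (add_le_add (hC z) (hD z))

/-- The scalar triple kernel. -/
def tri (F G : ℂ × ℂ → ℂ) (p : (ℂ × ℂ) × ℂ) : ℂ :=
  dbar12 F (p.2, p.1.1) * dbar2 G (p.2, p.1.2) + dbar2 F (p.2, p.1.1) * dbar12 G (p.2, p.1.2)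

lemma tri_good (hF : AH F) (hG : AH G) :
    Good (fun p : (ℂ × ℂ) × ℂ => |p.2.im| * (|p.1.1.im| * |p.1.2.im|)) (tri F G) := by
  have a := (dbar12_smooth hF.smooth).continuous
  have b := (dbar12_smooth hG.smooth).continuous
  have c := (dbar2_smooth hF.smooth).continuous
  have d := (dbar2_smooth hG.smooth).continuous
  refine ⟨by unfold tri; fun_prop, ?_, fun N => ?_⟩
  · obtain ⟨M, hM⟩ := hF.supp
    obtain ⟨L, hL⟩ := hG.supp
    refine ⟨max M L, fun p hp => ?_⟩
    have hp' : max M L < max (max ‖p.1.1‖ ‖p.1.2‖) ‖p.2‖ := hp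
    unfold tri
    rw [lt_max_iff, lt_max_iff] at hp'
    have hMle := le_max_left M L
    have hLle := le_max_right M L
    rcases hp' with (h | h) | h
    · rw [supp_slice2 (dbar12_supp hM) _ _ (hMle.trans_lt h),
        supp_slice2 (dbar2_supp hM) _ _ (hMle.trans_lt h)]; simp
    · rw [supp_slice2 (dbar12_supp hL) _ _ (hLle.trans_lt h),
        supp_slice2 (dbar2_supp hL) _ _ (hLle.trans_lt h)]; simp
    · rw [supp_slice1 (dbar12_supp hM) _ _ (hMle.trans_lt h),
        supp_slice1 (dbar2_supp hM) _ _ (hMle.trans_lt h)]; simp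
  · obtain ⟨C, hC0, hC⟩ := hF.f12 N
    obtain ⟨D, hD0, hD⟩ := hG.f12 N
    obtain ⟨C2, hC20, hC2⟩ := hF.f2 N
    obtain ⟨D2, hD20, hD2⟩ := hG.f2 N
    refine ⟨C * D2 + C2 * D, by positivity, fun p => ?_⟩
    unfold tri
    refine (norm_add_le _ _).trans ?_
    rw [norm_mul, norm_mul]
    calc _ ≤ (C * (|p.2.im| * |p.1.1.im|) ^ N) * (D2 * |p.1.2.im| ^ N)
          + (C2 * |p.1.1.im| ^ N) * (D * (|p.2.im| * |p.1.2.im|) ^ N) := by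
          gcongr
          exacts [hC (p.2, p.1.1), hD2 (p.2, p.1.2), hC2 (p.2, p.1.1), hD (p.2, p.1.2)]
      _ = _ := by simp only [mul_pow]; ring

lemma integral_prod_mulA [CompleteSpace A] {U V : ℂ → A} (hU : Integrable U) (hV : Integrable V) :
    ∫ p : ℂ × ℂ, U p.1 * V p.2 = (∫ w, U w) * (∫ v, V v) :=
  integral_prod_bilin (ContinuousLinearMap.mul ℂ A) hU hV

lemma mul2 [CompleteSpace A] {R₁ R₂ : ℂ → A} (h1 : IsRes R₁) (h2 : IsRes R₂)
    (hc : ∀ z w, Commute (R₁ z) (R₂ w)) (hF : AH F) (hG : AH G) :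
    (∫ z : ℂ × ℂ, dbar12 F z • (R₁ z.1 * R₂ z.2)) * (∫ z : ℂ × ℂ, dbar12 G z • (R₁ z.1 * R₂ z.2))
      = (π : ℂ) ^ 2 • ∫ z : ℂ × ℂ, dbar12 (fun z => F z * G z) z • (R₁ z.1 * R₂ z.2) := by
  have hsF := hF.smooth
  have hsG := hG.smooth
  -- single integrals as iterated integrals
  have one : ∀ {F : ℂ × ℂ → ℂ}, AH F →
      Integrable (fun w => (∫ z, dbar12 F (z, w) • R₁ z) * R₂ w) ∧
      ∫ z : ℂ × ℂ, dbar12 F z • (R₁ z.1 * R₂ z.2) =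
        ∫ w, (∫ z, dbar12 F (z, w) • R₁ z) * R₂ w := by
    intro F hF
    have gi : Integrable (fun z : ℂ × ℂ => dbar12 F z • (R₁ z.1 * R₂ z.2)) (volume.prod volume) :=
      (good_two h1 h2 hF.good).integrable
    have e : ∀ w, ∫ z, dbar12 F (z, w) • (R₁ z * R₂ w) =
        (∫ z, dbar12 F (z, w) • R₁ z) * R₂ w := by
      intro w
      rw [← integral_mul_const_of_integrable (hF.int1 h1 w)]
      simp_rw [smul_mul_assoc]
    have gi2 := gi.integral_prod_right
    simp only [e] at gi2
    refine ⟨gi2, ?_⟩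
    rw [Measure.volume_eq_prod, integral_prod_symm _ gi]
    simp only [e]
  obtain ⟨iF, eF⟩ := one hF
  obtain ⟨iG, eG⟩ := one hG
  rw [eF, eG, ← integral_prod_mulA iF iG]
  -- pointwise in (w, v)
  have pt : ∀ p : ℂ × ℂ, ((∫ z, dbar12 F (z, p.1) • R₁ z) * R₂ p.1) *
      ((∫ z, dbar12 G (z, p.2) • R₁ z) * R₂ p.2) =
      (-π : ℂ) • ∫ z, tri F G (p, z) • (R₁ z * (R₂ p.1 * R₂ p.2)) := by
    rintro ⟨w, v⟩
    have hcm : Commute (∫ z, dbar12 G (z, v) • R₁ z) (R₂ w) := by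
      unfold Commute SemiconjBy
      rw [← integral_mul_const_of_integrable (hG.int1 h1 v),
        ← integral_const_mul_of_integrable (hG.int1 h1 v)]
      simp_rw [smul_mul_assoc, mul_smul_comm, (hc _ _).eq]
    have ov := one_var_mul h1 (slice1_smooth (dbar2_smooth hsF) w)
      (slice1_smooth (dbar2_smooth hsG) v) (hF.s1' w) (hG.s1' v) (hF.flat_a1 w) (hG.flat_a1 v)
    simp_rw [dbar0_slice1 (dbar2_smooth hsF), dbar0_slice1 (dbar2_smooth hsG)] at ov
    change (∫ z, dbar12 F (z, w) • R₁ z) * (∫ z, dbar12 G (z, v) • R₁ z) = (-π : ℂ) •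
      ∫ z, tri F G ((w, v), z) • R₁ z at ov
    have it : Integrable (fun z => tri F G ((w, v), z) • R₁ z) := by
      have tg := tri_good hF hG
      refine (good_one h1 ⟨tg.cont.comp (by fun_prop), ?_, fun N => ?_⟩).integrable
      · obtain ⟨M, hM⟩ := tg.supp
        exact ⟨M, fun z hz => hM _ (hz.trans_le (norm_snd_le ((w, v), z)))⟩
      · obtain ⟨C, hC0, hC⟩ := tg.flat N
        refine ⟨C * (|w.im| * |v.im|) ^ N, by positivity, fun z => (hC _).trans (le_of_eq ?_)⟩
        simp only [mul_pow]; ring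
    calc _ = ((∫ z, dbar12 F (z, w) • R₁ z) * (∫ z, dbar12 G (z, v) • R₁ z)) *
          (R₂ w * R₂ v) := by
          simp only [mul_assoc]
          rw [← mul_assoc (R₂ w), ← hcm.eq, mul_assoc]
      _ = _ := by
          rw [ov, smul_mul_assoc, ← integral_mul_const_of_integrable it]
          simp_rw [smul_mul_assoc]
  simp_rw [pt]
  rw [integral_smul]
  have ti : Integrable (fun q : (ℂ × ℂ) × ℂ => tri F G q • (R₁ q.2 * (R₂ q.1.1 * R₂ q.1.2)))
      (volume.prod volume) := (good_three h1 h2 (tri_good hF hG)).integrable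
  rw [integral_integral_swap (f := fun p z => tri F G (p, z) • (R₁ z * (R₂ p.1 * R₂ p.2))) ti]
  have fin : ∀ z, ∫ p : ℂ × ℂ, tri F G (p, z) • (R₁ z * (R₂ p.1 * R₂ p.2)) =
      (-π : ℂ) • ∫ w, dbar12 (fun z => F z * G z) (z, w) • (R₁ z * R₂ w) := by
    intro z
    have ov1 := one_var_mul h2 (slice2_smooth (dbar1_smooth hsF) z)
      (slice2_smooth hsG z) (hF.s2' z) (hG.s2 z) (hF.flat_a2 z) (hG.flat_b2 z)
    have ov2 := one_var_mul h2 (slice2_smooth hsF z)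
      (slice2_smooth (dbar1_smooth hsG) z) (hF.s2 z) (hG.s2' z) (hF.flat_b2 z) (hG.flat_a2 z)
    simp_rw [dbar0_slice2 (dbar1_smooth hsF), dbar0_slice2 hsG, dbar12_symm hsF] at ov1
    simp_rw [dbar0_slice2 (dbar1_smooth hsG), dbar0_slice2 hsF, dbar12_symm hsG] at ov2
    have i1 := hF.int2 h2 z
    have i2 := hF.int2' h2 z
    have j1 := hG.int2 h2 z
    have j2 := hG.int2' h2 z
    have e : ∀ p : ℂ × ℂ, tri F G (p, z) • (R₁ z * (R₂ p.1 * R₂ p.2)) =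
        R₁ z * ((dbar12 F (z, p.1) • R₂ p.1) * (dbar2 G (z, p.2) • R₂ p.2) +
          (dbar2 F (z, p.1) • R₂ p.1) * (dbar12 G (z, p.2) • R₂ p.2)) := by
      intro p
      rw [smul_mul_smul_comm, smul_mul_smul_comm, ← add_smul, mul_smul_comm]
      rfl
    simp_rw [e]
    have k1 := i1.mul_prod j2
    have k2 := i2.mul_prod j1
    have m1 := hF.intm hG h2 z
    have m2 : Integrable (fun w => (dbar2 F (z, w) * dbar1 G (z, w) + F (z, w) * dbar12 G (z, w))
        • R₂ w) := by
      refine (hG.intm hF h2 z).congr (Filter.Eventually.of_forall fun w => ?_)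
      change (_ : ℂ) • _ = (_ : ℂ) • _
      congr 1
      ring
    have s1 : ∫ p : ℂ × ℂ, R₁ z * ((dbar12 F (z, p.1) • R₂ p.1) * (dbar2 G (z, p.2) • R₂ p.2) +
          (dbar2 F (z, p.1) • R₂ p.1) * (dbar12 G (z, p.2) • R₂ p.2)) =
        R₁ z * ∫ p : ℂ × ℂ, ((dbar12 F (z, p.1) • R₂ p.1) * (dbar2 G (z, p.2) • R₂ p.2) +
          (dbar2 F (z, p.1) • R₂ p.1) * (dbar12 G (z, p.2) • R₂ p.2)) :=
      integral_const_mul_of_integrable (k1.add k2)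
    have s2 : ∫ p : ℂ × ℂ, ((dbar12 F (z, p.1) • R₂ p.1) * (dbar2 G (z, p.2) • R₂ p.2) +
          (dbar2 F (z, p.1) • R₂ p.1) * (dbar12 G (z, p.2) • R₂ p.2)) =
        (∫ p : ℂ × ℂ, (dbar12 F (z, p.1) • R₂ p.1) * (dbar2 G (z, p.2) • R₂ p.2)) +
        ∫ p : ℂ × ℂ, (dbar2 F (z, p.1) • R₂ p.1) * (dbar12 G (z, p.2) • R₂ p.2) :=
      integral_add k1 k2
    rw [s1, s2, integral_prod_mulA i1 j2, integral_prod_mulA i2 j1, ov1, ov2, ← smul_add,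
      mul_smul_comm, ← integral_add m1 m2]
    congr 1
    have s3 := integral_const_mul_of_integrable (c := R₁ z) (m1.add m2)
    refine s3.symm.trans (integral_congr_ae (Filter.Eventually.of_forall fun w => ?_))
    simp only [Pi.add_apply]
    rw [dbar12_mul hsF hsG, ← add_smul, mul_smul_comm]
  simp_rw [fin]
  rw [integral_smul, smul_smul, Measure.volume_eq_prod, integral_prod]
  · congr 1; ring
  · exact (good_two h1 h2 (hF.mul hG).good).integrable

end



section
variable {B : Type*} [NormedAddCommGroup B] [NormedSpace ℂ B]

lemma res_unit {P : B →L[ℂ] B} (hs : RealSpectrum P) {z : ℂ} (hz : z.im ≠ 0) :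
    IsUnit (z • (1 : B →L[ℂ] B) - P) := by
  by_contra h
  refine hz (hs z ?_)
  rw [spectrum.mem_iff, Algebra.algebraMap_eq_smul_one]
  exact h

lemma res_isRes [CompleteSpace B] {P : B →L[ℂ] B} (hs : RealSpectrum P)
    (ht : TemperateResolventLoc P) : IsRes (res P) where
  diff := by
    intro z hz
    obtain ⟨u, hu⟩ := res_unit hs hz
    have h1 : DifferentiableAt ℂ Ring.inverse (z • (1 : B →L[ℂ] B) - P) := by
      rw [← hu]
      exact differentiableAt_inverse u.isUnit
    exact DifferentiableAt.comp (f := fun z : ℂ => z • (1 : B →L[ℂ] B) - P) z h1 (by fun_prop)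
  temp := by
    intro M
    obtain ⟨C, N, hC, hN, h⟩ := ht (max M 1) (by positivity)
    refine ⟨C * (max M 1) ^ ((⌈N⌉₊ : ℝ) - N), by positivity, ⌈N⌉₊, fun z hz hzM => ?_⟩
    have hy : 0 < |z.im| := abs_pos.2 hz
    have hzM' : ‖z‖ ≤ max M 1 := hzM.trans (le_max_left _ _)
    calc ‖res P z‖ * |z.im| ^ ⌈N⌉₊ ≤ C * |z.im| ^ (-N) * |z.im| ^ ⌈N⌉₊ := by
          gcongr; exact h z hz hzM'
      _ = C * |z.im| ^ ((⌈N⌉₊ : ℝ) - N) := by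
          rw [mul_assoc, ← Real.rpow_natCast, ← Real.rpow_add hy]
          congr 2; ring
      _ ≤ _ := by
          gcongr
          · have := Nat.le_ceil N; linarith
          · exact (abs_im_le_norm z).trans hzM'
  ident := by
    intro z w hz hw
    have uz := res_unit hs hz
    have uw := res_unit hs hw
    have a := Ring.inverse_mul_cancel _ uz
    have b := Ring.mul_inverse_cancel _ uw
    unfold res
    set X := Ring.inverse (z • (1 : B →L[ℂ] B) - P)
    set Y := Ring.inverse (w • (1 : B →L[ℂ] B) - P)
    have e : (w - z) • (X * Y) = X * ((w • (1 : B →L[ℂ] B) - P) - (z • (1 : B →L[ℂ] B) - P)) * Y := by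
      rw [sub_sub_sub_cancel_right, ← sub_smul, mul_smul_comm, mul_one, smul_mul_assoc]
    rw [e, mul_sub, sub_mul, mul_assoc, b, a, one_mul, mul_one]

lemma res_comm {P₁ P₂ : B →L[ℂ] B} (h : P₁ * P₂ = P₂ * P₁) (z w : ℂ) :
    Commute (res P₁ z) (res P₂ w) := by
  have hc : Commute P₁ P₂ := h
  refine Commute.ringInverse_ringInverse ?_
  exact (((Commute.one_left _).smul_left z).sub_left
    (((Commute.one_right _).smul_right w).sub_right hc))

lemma ah_of {f : ℝ × ℝ → ℂ} {F : ℂ × ℂ → ℂ} (h : IsSpecialAHExt2 f F) : AH F := by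
  obtain ⟨hs, hc, -, hN⟩ := h
  refine ⟨hs, bound_of_hcs hc, fun N => ?_, fun N => ?_, fun N => ?_⟩
  all_goals
    obtain ⟨C, hC⟩ := hN N
    refine ⟨|C|, abs_nonneg _, fun z => ?_⟩
  · exact (hC z).1.trans (by gcongr; exact le_abs_self C)
  · exact (hC z).2.1.trans (by gcongr; exact le_abs_self C)
  · exact (hC z).2.2.trans (by gcongr; exact le_abs_self C)

end

/-- Proposition 7.1 (case `m = 2`): multiplicativity of the calculus for a pair of
commuting operators: `f(P₁,P₂) ∘ g(P₁,P₂) = (fg)(P₁,P₂)`. -/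
theorem multiplicativity_commuting {B : Type*} [NormedAddCommGroup B] [NormedSpace ℂ B]
    [CompleteSpace B] (P₁ P₂ : B →L[ℂ] B)
    (hcomm : P₁ * P₂ = P₂ * P₁)
    (hspec₁ : RealSpectrum P₁) (hres₁ : TemperateResolventLoc P₁)
    (hspec₂ : RealSpectrum P₂) (hres₂ : TemperateResolventLoc P₂)
    (f g : ℝ × ℝ → ℂ)
    (hf_smooth : ContDiff ℝ (⊤ : ℕ∞) f) (hf_supp : HasCompactSupport f)
    (hg_smooth : ContDiff ℝ (⊤ : ℕ∞) g) (hg_supp : HasCompactSupport g)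
    (F G H : ℂ × ℂ → ℂ)
    (hF : IsSpecialAHExt2 f F) (hG : IsSpecialAHExt2 g G)
    (hH : IsSpecialAHExt2 (fun x : ℝ × ℝ => f x * g x) H) :
    calc2 P₁ P₂ F * calc2 P₁ P₂ G = calc2 P₁ P₂ H := by
  have h1 := res_isRes hspec₁ hres₁
  have h2 := res_isRes hspec₂ hres₂
  have aF := ah_of hF
  have aG := ah_of hG
  have aH := ah_of hH
  have aFG := aF.mul aG
  have aK := aH.sub aFG
  have m := mul2 h1 h2 (res_comm hcomm) aF aG
  obtain ⟨M, hM⟩ := aK.supp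
  have k := indep h1 h2 aK.smooth hM (fun x y => by
    rw [hH.2.2.1, hF.2.2.1, hG.2.2.1, sub_self]) aK.good
  have iH : Integrable (fun z : ℂ × ℂ => dbar12 H z • (res P₁ z.1 * res P₂ z.2)) volume :=
    (good_two h1 h2 aH.good).integrable
  have iFG : Integrable (fun z : ℂ × ℂ => dbar12 (fun z => F z * G z) z •
      (res P₁ z.1 * res P₂ z.2)) volume :=
    (good_two h1 h2 aFG.good).integrable
  simp_rw [dbar12_sub aH.smooth aFG.smooth, sub_smul] at k
  rw [integral_sub iH iFG, sub_eq_zero] at k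
  unfold calc2
  have hpi : (π : ℂ) ≠ 0 := by exact_mod_cast Real.pi_ne_zero
  rw [smul_mul_smul_comm]
  have m' := m
  rw [← k] at m'
  refine (congrArg _ m').trans ?_
  rw [smul_smul]
  congr 1
  field_simp
end
end

section
/- Let P be as in the context and let f ∈ C_0^∞(ℝ) with supp f ∩ σ(P) = ∅. Then for every almost holomorphic extension f̃ of f, −(1/π)∫_ℂ (∂f̃/∂z̄)(z)·(z·1 − P)⁻¹ L(dz) = 0. -/
open MeasureTheory Complex Real

noncomputable section

/-- The Cauchy–Riemann operator `∂F/∂z̄ = (∂F/∂x + i ∂F/∂y)/2`. -/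
def dbar (F : ℂ → ℂ) (z : ℂ) : ℂ :=
  (fderiv ℝ F z 1 + Complex.I * fderiv ℝ F z Complex.I) / 2

/-- `F` is an almost holomorphic extension of `f ∈ C_0^∞(ℝ)`. -/
def IsAHExt (f : ℝ → ℂ) (F : ℂ → ℂ) : Prop :=
  ContDiff ℝ (⊤ : ℕ∞) F ∧ HasCompactSupport F ∧ (∀ x : ℝ, F x = f x) ∧
    ∀ N : ℕ, ∃ C : ℝ, ∀ z : ℂ, ‖dbar F z‖ ≤ C * |z.im| ^ N

def FlatR (g : ℂ → ℂ) : Prop := ∀ N : ℕ, ∃ C : ℝ, ∀ z : ℂ, ‖g z‖ ≤ C * |z.im| ^ N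

lemma smooth_dv {g : ℂ → ℂ} (hg : ContDiff ℝ (⊤ : ℕ∞) g) (v : ℂ) :
    ContDiff ℝ (⊤ : ℕ∞) (fun z => fderiv ℝ g z v) := by
  have h : ContDiff ℝ (⊤ : ℕ∞) (fderiv ℝ g) := hg.fderiv_right (by simp)
  exact h.clm_apply contDiff_const

lemma supp_dv {g : ℂ → ℂ} (hg : HasCompactSupport g) (v : ℂ) :
    HasCompactSupport (fun z => fderiv ℝ g z v) :=
  hg.fderiv_apply ℝ v

lemma smooth_dbar {g : ℂ → ℂ} (hg : ContDiff ℝ (⊤ : ℕ∞) g) :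
    ContDiff ℝ (⊤ : ℕ∞) (dbar g) := by
  unfold dbar
  exact ((smooth_dv hg 1).add (contDiff_const.mul (smooth_dv hg I))).div_const _

lemma supp_dbar {g : ℂ → ℂ} (hg : HasCompactSupport g) : HasCompactSupport (dbar g) := by
  have : HasCompactSupport
      ((fun z => fderiv ℝ g z 1) + (fun z => Complex.I * fderiv ℝ g z I)) :=
    (supp_dv hg 1).add ((supp_dv hg I).mul_left (f := fun _ => Complex.I))
  have h2 := this.mul_right (f' := fun _ => (2:ℂ)⁻¹)
  exact h2

lemma dx_key {g : ℂ → ℂ} (hg : ContDiff ℝ (⊤ : ℕ∞) g) (hc : HasCompactSupport g) :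
    ∃ M : ℝ, 0 ≤ M ∧ ∀ (z : ℂ) (t : ℝ), 0 < t →
      t * ‖fderiv ℝ g z 1‖ ≤ ‖g (z + t)‖ + ‖g z‖ + M * t * t := by
  have h1 : ContDiff ℝ (⊤ : ℕ∞) (fderiv ℝ g) := hg.fderiv_right (by simp)
  obtain ⟨M, hM⟩ := h1.lipschitzWith_of_hasCompactSupport (hc.fderiv ℝ) (by simp)
  refine ⟨M, M.2, ?_⟩
  intro z t ht
  have hL : ∀ a ∈ Metric.closedBall z t, ‖fderiv ℝ g a - fderiv ℝ g z‖ ≤ M * t := by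
    intro a ha
    have := hM.norm_sub_le a z
    refine this.trans ?_
    have : ‖a - z‖ ≤ t := by simpa [dist_eq_norm] using ha
    gcongr
  have := Convex.norm_image_sub_le_of_norm_fderiv_le' (𝕜 := ℝ) (x := z) (y := z + t)
    (fun x _ => (hg.differentiable (by simp)) x) hL (convex_closedBall z t)
    (by simp [ht.le]) (by simp [abs_of_pos ht])
  have e : fderiv ℝ g z ((z + t) - z) = t * fderiv ℝ g z 1 := by
    have : (z + t) - z = t • (1:ℂ) := by simp
    rw [this, map_smul]; simp
  rw [e] at this
  have e2 : ‖z + (t:ℂ) - z‖ = t := by simp [abs_of_pos ht]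
  rw [e2] at this
  have e3 : ‖(t:ℂ) * fderiv ℝ g z 1‖ = t * ‖fderiv ℝ g z 1‖ := by simp [abs_of_pos ht]
  rw [← e3]
  calc ‖(t:ℂ) * fderiv ℝ g z 1‖
      = ‖g (z + t) - g z - (g (z + t) - g z - t * fderiv ℝ g z 1)‖ := by congr 1; ring
    _ ≤ ‖g (z+t)‖ + ‖g z‖ + ‖g (z + t) - g z - t * fderiv ℝ g z 1‖ :=
        (norm_sub_le _ _).trans (by gcongr; exact norm_sub_le _ _)
    _ ≤ _ := by gcongr

lemma flat_dx {g : ℂ → ℂ} (hg : ContDiff ℝ (⊤ : ℕ∞) g) (hc : HasCompactSupport g)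
    (hf : FlatR g) : FlatR (fun z => fderiv ℝ g z 1) := by
  obtain ⟨M, hM0, key⟩ := dx_key hg hc
  intro N
  obtain ⟨C, hC⟩ := hf (2 * N)
  refine ⟨2 * C + M, fun z => ?_⟩
  by_cases hz : z.im = 0
  · have h0 : ∀ w : ℂ, w.im = 0 → g w = 0 := by
      intro w hw
      obtain ⟨C', hC'⟩ := hf 1
      have := hC' w
      simpa [hw] using this
    have hD : fderiv ℝ g z 1 = 0 := by
      have : ∀ t : ℝ, 0 < t → ‖fderiv ℝ g z 1‖ ≤ M * t := by
        intro t ht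
        have := key z t ht
        rw [h0 z hz, h0 (z+t) (by simp [hz])] at this
        simp only [norm_zero, zero_add] at this
        nlinarith
      have h' : ‖fderiv ℝ g z 1‖ ≤ 0 := by
        refine le_of_forall_pos_le_add fun ε hε => ?_
        have h3 := this (ε / (M + 1)) (by positivity)
        refine h3.trans ?_
        rw [zero_add, mul_div_assoc', div_le_iff₀ (by positivity)]
        nlinarith
      simpa using h'
    have := hC z
    simp only [hD, norm_zero, hz, abs_zero]
    rcases Nat.eq_zero_or_pos N with h | h
    · subst h
      simp at this ⊢
      have := (norm_nonneg _).trans this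
      positivity
    · simp [h.ne']
  · have ht : 0 < |z.im| ^ N := by positivity
    have h4 := key z _ ht
    have h5 := hC z
    have h6 := hC (z + ((|z.im| ^ N : ℝ) : ℂ))
    have h7 : (z + ((|z.im| ^ N : ℝ) : ℂ)).im = z.im := by
      rw [add_im, ofReal_im, add_zero]
    rw [h7] at h6
    have h8 : |z.im| ^ (2 * N) = |z.im| ^ N * |z.im| ^ N := by rw [two_mul, pow_add]
    rw [h8] at h5 h6
    have h9 : |z.im| ^ N * ‖fderiv ℝ g z 1‖ ≤ |z.im| ^ N * ((2 * C + M) * |z.im| ^ N) := by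
      refine h4.trans ?_
      linarith
    exact le_of_mul_le_mul_left h9 ht

lemma dbar_dx {g : ℂ → ℂ} (hg : ContDiff ℝ (⊤ : ℕ∞) g) (z : ℂ) :
    dbar (fun z => fderiv ℝ g z 1) z = fderiv ℝ (dbar g) z 1 := by
  have h1 : ContDiff ℝ (⊤ : ℕ∞) (fderiv ℝ g) := hg.fderiv_right (by simp)
  have hd : DifferentiableAt ℝ (fderiv ℝ g) z := h1.differentiable (by simp) z
  have hs : IsSymmSndFDerivAt ℝ g z :=
    hg.contDiffAt.isSymmSndFDerivAt (by simp only [minSmoothness_of_isRCLikeNormedField]; exact WithTop.coe_le_coe.2 (le_top : (2:ℕ∞) ≤ ⊤))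
  have hv : ∀ v w : ℂ, fderiv ℝ (fun z => fderiv ℝ g z v) z w = fderiv ℝ (fderiv ℝ g) z w v := by
    intro v w
    rw [fderiv_clm_apply hd (differentiableAt_const v)]
    simp
  have hdv : ∀ v : ℂ, DifferentiableAt ℝ (fun z => fderiv ℝ g z v) z :=
    fun v => (smooth_dv hg v).differentiable (by simp) z
  have hr : HasFDerivAt (dbar g) (((2:ℂ)⁻¹) • (fderiv ℝ (fun z => fderiv ℝ g z 1) z +
      Complex.I • fderiv ℝ (fun z => fderiv ℝ g z I) z)) z := by
    have := (((hdv 1).hasFDerivAt.add ((hdv I).hasFDerivAt.const_smul Complex.I)).const_smul ((2:ℂ)⁻¹))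
    refine this.congr_of_eventuallyEq (Filter.Eventually.of_forall fun w => ?_)
    simp [dbar, div_eq_inv_mul]
  rw [hr.fderiv]
  simp only [dbar, smul_apply, add_apply, hv, smul_eq_mul]
  rw [hs 1 I]
  ring

lemma flat_ext (U : Set ℝ) (hU : IsOpen U) (N : ℕ) : ∀ g : ℂ → ℂ, ContDiff ℝ (⊤ : ℕ∞) g →
    HasCompactSupport g → FlatR (dbar g) → (∀ x ∈ U, g (x : ℂ) = 0) →
    ∃ C : ℝ, ∀ z : ℂ, z.re ∈ U → ‖g z‖ ≤ C * |z.im| ^ N := by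
  induction N with
  | zero =>
    intro g hg hc _ _
    obtain ⟨M, hM⟩ := hc.exists_bound_of_continuous hg.continuous
    exact ⟨M, fun z _ => by simpa using hM z⟩
  | succ N ih =>
    intro g hg hc hf h0
    have hfl : FlatR (dbar (fun z => fderiv ℝ g z 1)) := by
      have := flat_dx (smooth_dbar hg) (supp_dbar hc) hf
      intro n
      obtain ⟨C, hC⟩ := this n
      exact ⟨C, fun z => by rw [dbar_dx hg]; exact hC z⟩
    have hz0 : ∀ x ∈ U, fderiv ℝ g (x : ℂ) 1 = 0 := by
      intro x hx
      have h1 : HasFDerivAt g (fderiv ℝ g (x:ℂ)) (x:ℂ) :=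
        ((hg.differentiable (by simp)) _).hasFDerivAt
      have h2 : HasDerivAt (fun t : ℝ => g (t : ℂ)) (fderiv ℝ g (x:ℂ) 1) x :=
        h1.comp_hasDerivAt x (Complex.ofRealCLM.hasDerivAt (x := x))
      have h3 : HasDerivAt (fun t : ℝ => g (t : ℂ)) 0 x := by
        refine (hasDerivAt_const x (0:ℂ)).congr_of_eventuallyEq ?_
        filter_upwards [hU.mem_nhds hx] with t ht using h0 t ht
      exact h2.unique h3
    obtain ⟨C1, hC1⟩ := ih _ (smooth_dv hg 1) (supp_dv hc 1) hfl hz0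
    obtain ⟨C2, hC2⟩ := hf N
    refine ⟨|C1| + 2 * |C2|, fun z hz => ?_⟩
    have hb : ∀ w : ℂ, w.re ∈ U → ‖fderiv ℝ g w I‖ ≤ (|C1| + 2 * |C2|) * |w.im| ^ N := by
      intro w hw
      have e : fderiv ℝ g w I = I * (fderiv ℝ g w 1) - 2 * I * dbar g w := by
        unfold dbar
        linear_combination (fderiv ℝ g w I) * Complex.I_sq
      rw [e]
      refine (norm_sub_le _ _).trans ?_
      simp only [norm_mul, Complex.norm_I, one_mul, mul_one, Complex.norm_ofNat]
      have a1 := hC1 w hw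
      have a2 := hC2 w
      have p : 0 ≤ |w.im| ^ N := by positivity
      have b1 := mul_le_mul_of_nonneg_right (le_abs_self C1) p
      have b2 := mul_le_mul_of_nonneg_right (le_abs_self C2) p
      linarith
    have hd : ∀ t : ℝ, HasDerivAt (fun t : ℝ => g ((z.re : ℂ) + t * I))
        (fderiv ℝ g ((z.re : ℂ) + t * I) I) t := by
      intro t
      have h1 : HasFDerivAt g (fderiv ℝ g ((z.re : ℂ) + t * I)) ((z.re : ℂ) + t * I) :=
        ((hg.differentiable (by simp)) _).hasFDerivAt
      have h2 : HasDerivAt (fun t : ℝ => (z.re : ℂ) + t * I) I t := by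
        have := ((Complex.ofRealCLM.hasDerivAt (x := t)).mul_const I).const_add (z.re : ℂ)
        simpa using this
      exact h1.comp_hasDerivAt t h2
    have := Convex.norm_image_sub_le_of_norm_hasDerivWithin_le (𝕜 := ℝ)
      (s := Metric.closedBall (0:ℝ) |z.im|) (x := 0) (y := z.im)
      (C := (|C1| + 2 * |C2|) * |z.im| ^ N)
      (fun t _ => (hd t).hasDerivWithinAt) (fun t ht => by
        refine (hb _ (by simpa using hz)).trans ?_
        have ht' : |t| ≤ |z.im| := by simpa using ht
        have : ((z.re : ℂ) + t * I).im = t := by simp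
        rw [this]
        gcongr) (convex_closedBall _ _) (by simp) (by simp)
    simp only [Complex.re_add_im, ofReal_zero, zero_mul, add_zero, sub_zero, h0 _ hz] at this
    rw [pow_succ, ← mul_assoc]
    simpa using this

lemma integral_zero_of_supp {E : Type*} [NormedAddCommGroup E] [NormedSpace ℂ E] [CompleteSpace E]
    (G H : ℂ → E) (G' : ℂ → ℂ →L[ℝ] E) (hG : ∀ z, HasFDerivAt G (G' z) z)
    (hGc : HasCompactSupport G) (hH : Continuous H) (hHc : HasCompactSupport H)
    (hGH : ∀ z, Complex.I • G' z 1 - G' z I = H z) : ∫ z, H z = 0 := by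
  obtain ⟨A, hA⟩ : ∃ A : ℝ, 0 < A ∧ ∀ z : ℂ, A ≤ ‖z‖ → G z = 0 ∧ H z = 0 := by
    obtain ⟨A, hA⟩ := (hGc.isCompact.union hHc.isCompact).isBounded.exists_norm_le
    refine ⟨|A| + 1, by positivity, fun z hz => ⟨?_, ?_⟩⟩
    · refine image_eq_zero_of_notMem_tsupport fun h => ?_
      have := hA z (Or.inl h)
      linarith [le_abs_self A]
    · refine image_eq_zero_of_notMem_tsupport fun h => ?_
      have := hA z (Or.inr h)
      linarith [le_abs_self A]
  obtain ⟨hA0, hA⟩ := hA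
  have hre : ∀ x y : ℝ, A ≤ |x| → A ≤ ‖(x:ℂ) + y * I‖ := by
    intro x y h
    have := abs_re_le_norm ((x:ℂ) + y * I)
    simp at this
    exact h.trans this
  have him : ∀ x y : ℝ, A ≤ |y| → A ≤ ‖(x:ℂ) + y * I‖ := by
    intro x y h
    have := abs_im_le_norm ((x:ℂ) + y * I)
    simp at this
    exact h.trans this
  have hint : Integrable H := hH.integrable_of_hasCompactSupport hHc
  have key := Complex.integral_boundary_rect_of_hasFDerivAt_real_off_countable G G'
    (⟨-A, -A⟩ : ℂ) (⟨A, A⟩ : ℂ) ∅ Set.countable_empty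
    (fun z _ => (hG z).continuousAt.continuousWithinAt) (fun z _ => hG z)
    (by simp only [hGH]; exact hint.integrableOn)
  simp only [hGH] at key
  have b1 : ∀ x : ℝ, G (x + ((-A : ℝ) : ℂ) * I) = 0 := fun x => (hA _ (him _ _ (by simp [abs_of_pos hA0]))).1
  have b2 : ∀ x : ℝ, G (x + ((A : ℝ) : ℂ) * I) = 0 := fun x => (hA _ (him _ _ (by simp [abs_of_pos hA0]))).1
  have b3 : ∀ x : ℝ, G (((-A : ℝ) : ℂ) + x * I) = 0 := fun x => (hA _ (hre _ _ (by simp [abs_of_pos hA0]))).1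
  have b4 : ∀ x : ℝ, G (((A : ℝ) : ℂ) + x * I) = 0 := fun x => (hA _ (hre _ _ (by simp [abs_of_pos hA0]))).1
  simp only [b1, b2, b3, b4, intervalIntegral.integral_zero, smul_zero, sub_zero, add_zero] at key
  have c1 : ∀ x : ℝ, ∫ y : ℝ in -A..A, H (x + y * I) = ∫ y : ℝ, H (x + y * I) := by
    intro x
    refine intervalIntegral.integral_eq_integral_of_support_subset fun y hy => ?_
    by_contra h
    refine hy (hA _ (him _ _ ?_)).2
    by_contra h'
    push Not at h'
    exact h ⟨(abs_lt.1 h').1, (abs_lt.1 h').2.le⟩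
  simp only [c1] at key
  rw [intervalIntegral.integral_eq_integral_of_support_subset] at key
  · have mp := (Complex.volume_preserving_equiv_real_prod).symm
    rw [← mp.integral_comp' (f := Complex.measurableEquivRealProd.symm) H]
    have hi2 : Integrable (fun p : ℝ × ℝ => H (Complex.measurableEquivRealProd.symm p)) :=
      mp.integrable_comp_of_integrable hint
    rw [Measure.volume_eq_prod, integral_prod _ hi2, key]
    congr 1
    ext x
    congr 1
    ext y
    rw [Complex.measurableEquivRealProd_symm_apply, Complex.mk_eq_add_mul_I]
  · intro x hx
    by_contra h
    apply hx
    have h' : A ≤ |x| := by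
      by_contra h'
      push Not at h'
      exact h ⟨(abs_lt.1 h').1, (abs_lt.1 h').2.le⟩
    simp [fun y : ℝ => (hA _ (hre x y h')).2]

lemma res_hasDerivAt {B : Type*} [NormedAddCommGroup B] [NormedSpace ℂ B]
    [CompleteSpace B] (P : B →L[ℂ] B) {z : ℂ} (hz : z ∉ spectrum ℂ P) :
    ∃ R' : B →L[ℂ] B, HasDerivAt (res P) R' z := by
  have h : res P = resolvent P := by
    ext1 w
    simp [res, resolvent, Algebra.algebraMap_eq_smul_one]
  rw [h]
  exact ⟨_, spectrum.hasDerivAt_resolvent_const_left (by simpa [spectrum] using hz)⟩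

/-- Local bound for a flat function times the resolvent. -/
lemma local_bound {B : Type*} [NormedAddCommGroup B] [NormedSpace ℂ B]
    (P : B →L[ℂ] B) (hres : TemperateResolventLoc P) (g : ℂ → ℂ) (U : Set ℝ)
    (hU : IsOpen U)
    (hg : ∀ N : ℕ, ∃ C : ℝ, ∀ z : ℂ, z.re ∈ U → ‖g z‖ ≤ C * |z.im| ^ N)
    (z₀ : ℂ) (h0 : z₀.im = 0) (hz₀ : z₀.re ∈ U) :
    ∃ C : ℝ, 0 ≤ C ∧ ∀ᶠ z in nhds z₀, ‖g z • res P z‖ ≤ C * ‖z - z₀‖ ^ 2 := by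
  obtain ⟨C, N, hC0, hN0, hC⟩ := hres (‖z₀‖ + 1) (by positivity)
  obtain ⟨K, hK⟩ := hg (⌈N⌉₊ + 2)
  refine ⟨|K| * C, by positivity, ?_⟩
  have e1 : ∀ᶠ z in nhds z₀, z.re ∈ U :=
    Complex.continuous_re.continuousAt.eventually (hU.mem_nhds hz₀)
  filter_upwards [e1, Metric.ball_mem_nhds z₀ one_pos] with z hz hb
  have hb' : ‖z - z₀‖ < 1 := by simpa [dist_eq_norm] using hb
  have him : |z.im| ≤ ‖z - z₀‖ := by
    have := abs_im_le_norm (z - z₀)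
    simpa [h0] using this
  have hgz := hK z hz
  by_cases hzi : z.im = 0
  · have : g z = 0 := by simpa [hzi] using hgz
    rw [this, zero_smul, norm_zero]
    positivity
  · have hp : 0 < |z.im| := abs_pos.2 hzi
    have hR := hC z hzi (by
      have := norm_add_le (z - z₀) z₀
      simp at this
      linarith)
    rw [norm_smul]
    have h1 : ‖g z‖ ≤ |K| * (|z.im| ^ N * |z.im| ^ 2) := by
      refine hgz.trans ?_
      have : |z.im| ^ (⌈N⌉₊ + 2) ≤ |z.im| ^ N * |z.im| ^ 2 := by
        rw [pow_add]
        gcongr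
        rw [← Real.rpow_natCast]
        exact Real.rpow_le_rpow_of_exponent_ge hp (by linarith) (Nat.le_ceil N)
      calc K * |z.im| ^ (⌈N⌉₊ + 2) ≤ |K| * |z.im| ^ (⌈N⌉₊ + 2) := by
            gcongr; exact le_abs_self K
        _ ≤ _ := by gcongr
    calc ‖g z‖ * ‖res P z‖
        ≤ (|K| * (|z.im| ^ N * |z.im| ^ 2)) * (C * |z.im| ^ (-N)) := by gcongr
      _ = |K| * C * (|z.im| ^ N * |z.im| ^ (-N)) * |z.im| ^ 2 := by ring
      _ = |K| * C * |z.im| ^ 2 := by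
          rw [← Real.rpow_add hp]; simp
      _ ≤ _ := by gcongr

lemma deriv_of_bound {E : Type*} [NormedAddCommGroup E] [NormedSpace ℝ E] (G : ℂ → E) (z₀ : ℂ)
    (C : ℝ) (h : ∀ᶠ z in nhds z₀, ‖G z‖ ≤ C * ‖z - z₀‖ ^ 2) :
    HasFDerivAt G (0 : ℂ →L[ℝ] E) z₀ := by
  have h0 : G z₀ = 0 := by simpa using h.self_of_nhds
  have hO : G =O[nhds z₀] fun z => ‖z - z₀‖ ^ 2 := by
    refine Asymptotics.IsBigO.of_bound C ?_
    filter_upwards [h] with z hz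
    simpa using hz
  exact hO.hasFDerivAt (by norm_num)


/-- Example 3, first half: if `supp f` is disjoint from `σ(P)` then `f(P) = 0`. -/
theorem vanishing_off_spectrum {B : Type*} [NormedAddCommGroup B] [NormedSpace ℂ B]
    [CompleteSpace B] (P : B →L[ℂ] B)
    (hspec : RealSpectrum P) (hres : TemperateResolventLoc P)
    (f : ℝ → ℂ) (hf_smooth : ContDiff ℝ (⊤ : ℕ∞) f) (hf_supp : HasCompactSupport f)
    (hdisj : ∀ x ∈ tsupport f, (x : ℂ) ∉ spectrum ℂ P)
    (F : ℂ → ℂ) (hF : IsAHExt f F) :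
    (-(1/(π:ℂ))) • ∫ z : ℂ, dbar F z • res P z = 0 := by
  obtain ⟨hFs, hFc, hFf, hFl⟩ := hF
  set U : Set ℝ := (tsupport f)ᶜ with hUdef
  have hU : IsOpen U := (isClosed_tsupport f).isOpen_compl
  have hF0 : ∀ x ∈ U, F (x : ℂ) = 0 := fun x hx => by
    rw [hFf]; exact image_eq_zero_of_notMem_tsupport hx
  have hflat := fun N => flat_ext U hU N F hFs hFc hFl hF0
  have hmem : ∀ z ∈ spectrum ℂ P, z.im = 0 ∧ z.re ∈ U := by
    intro z hz
    have h := hspec z hz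
    refine ⟨h, fun h' => hdisj _ h' ?_⟩
    have : (z.re : ℂ) = z := by apply Complex.ext <;> simp [h]
    rwa [this]
  have hdb0 : ∀ z : ℂ, z.im = 0 → dbar F z = 0 := by
    intro z hz
    obtain ⟨C, hC⟩ := hFl 1
    simpa [hz] using hC z
  have hH : Continuous fun z => dbar F z • res P z := by
    rw [continuous_iff_continuousAt]
    intro z
    by_cases hz : z ∈ spectrum ℂ P
    · obtain ⟨h1, h2⟩ := hmem z hz
      obtain ⟨C, _, hC⟩ := local_bound P hres (dbar F) Set.univ isOpen_univ
        (fun N => (hFl N).imp fun C h z _ => h z) z h1 trivial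
      exact (deriv_of_bound _ z C hC).continuousAt
    · obtain ⟨R', hR'⟩ := res_hasDerivAt P hz
      exact (smooth_dbar hFs).continuous.continuousAt.smul hR'.continuousAt
  have hG : ∀ z, ∃ G' : ℂ →L[ℝ] (B →L[ℂ] B), HasFDerivAt (fun z => F z • res P z) G' z ∧
      Complex.I • G' 1 - G' I = (2 * Complex.I) • (dbar F z • res P z) := by
    intro z
    by_cases hz : z ∈ spectrum ℂ P
    · obtain ⟨h1, h2⟩ := hmem z hz
      obtain ⟨C, _, hC⟩ := local_bound P hres F U hU hflat z h1 h2
      refine ⟨0, deriv_of_bound _ z C hC, ?_⟩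
      simp [hdb0 z h1]
    · obtain ⟨R', hR'⟩ := res_hasDerivAt P hz
      have hR2 := hR'.hasFDerivAt.restrictScalars ℝ
      have hFd : HasFDerivAt F (fderiv ℝ F z) z := ((hFs.differentiable (by simp)) z).hasFDerivAt
      refine ⟨_, hFd.smul hR2, ?_⟩
      simp only [add_apply, smul_apply, ContinuousLinearMap.smulRight_apply,
        ContinuousLinearMap.coe_restrictScalars', ContinuousLinearMap.toSpanSingleton_apply,
        one_smul, dbar]
      match_scalars
      · ring
      · linear_combination (-(fderiv ℝ F z I)) * Complex.I_sq
  choose G' hG' hGH using hG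
  have hz := integral_zero_of_supp (fun z => F z • res P z)
    (fun z => (2 * Complex.I) • (dbar F z • res P z)) G' hG' (hFc.smul_right)
    (by have h3 := hH.const_smul (2 * Complex.I); exact h3) (HasCompactSupport.smul_left (f := fun _ => 2 * Complex.I) ((supp_dbar hFc).smul_right)) hGH
  rw [integral_smul] at hz
  have h2 : (2 * Complex.I) ≠ 0 := by simp
  rw [(smul_eq_zero.1 hz).resolve_left h2, smul_zero]
end
end
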